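/- Let M be an exponential family (Ĵ(θ;x^n) = J(θ) identically) satisfying Assumptions (A1)–(A6) with boundary exponent d > 0, let α > 1, λ ∈ (0, 1−α^{-1}], a > 0, and 0 < 2ι < d. Set REḠ = α( (K/2) log n + log ∫_Θ (det J(θ))^{1/2} dθ + f(n) + n^{−ι} ), with f(n) = C_n K a²/(8α) − K log a + r(n) as in the exponential-family regret bound. Then there exists a two-part code p'_twopart (combining the Fisher-information quantization code for θ̂ ∈ int Θ with the boundary code of (A6)) whose MDL estimator p̈ satisfies, for every p* ∈ M and all sufficiently large n: E_{X^n∼p*}[ d̄_λ(p* ‖ p̈_{X^n}) ] ≤ REḠ/n, and for every b > 0, Pr{ d̄_λ(p* ‖ p̈_{X^n}) > REḠ/n + b } < e^{−n b/α} under X^n ∼ p*. -/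

import Mathlib

open MeasureTheory Matrix

noncomputable section

/-- Euclidean norm on `Fin K → ℝ`. -/
def euclNorm {K : ℕ} (v : Fin K → ℝ) : ℝ := Real.sqrt (∑ i, (v i) ^ 2)

/-- Empirical Fisher information of a single observation:
`Ĵ_{ij}(θ;x) = −∂²(log p_θ(x))/∂θᵢ∂θⱼ`. -/
def Jhat1 {K : ℕ} {X : Type*} (p : (Fin K → ℝ) → X → ℝ) (θ : Fin K → ℝ) (x : X) :
    Matrix (Fin K) (Fin K) ℝ :=
  Matrix.of fun i j =>
    -(fderiv ℝ (fun θ' => fderiv ℝ (fun θ'' => Real.log (p θ'' x)) θ' (Pi.single j 1)) θ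
      (Pi.single i 1))

/-- Empirical Fisher information of a sample:
`Ĵ(θ;x^n) = (1/n) Σ_t Ĵ(θ;x_t)`. -/
def JhatN {K : ℕ} {X : Type*} (p : (Fin K → ℝ) → X → ℝ) {n : ℕ} (θ : Fin K → ℝ)
    (xn : Fin n → X) : Matrix (Fin K) (Fin K) ℝ :=
  (n : ℝ)⁻¹ • ∑ t, Jhat1 p θ (xn t)

/-- Fisher information `J(θ) = E_{p_θ}[Ĵ(θ;X)]`. -/
def FisherJ {K : ℕ} {X : Type*} [MeasurableSpace X] (μ : Measure X)
    (p : (Fin K → ℝ) → X → ℝ) (θ : Fin K → ℝ) : Matrix (Fin K) (Fin K) ℝ :=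
  Matrix.of fun i j => ∫ x, p θ x * Jhat1 p θ x i j ∂μ

/-- Rényi divergence of order `lam` between probability densities `p` and `q`. -/
def renyiDiv {X : Type*} [MeasurableSpace X] (μ : Measure X) (lam : ℝ) (p q : X → ℝ) : ℝ :=
  -(1 / (1 - lam)) * Real.log (∫ x, p x * (q x / p x) ^ (1 - lam) ∂μ)

lemma euclNorm_sq {K : ℕ} (v : Fin K → ℝ) : euclNorm v ^ 2 = ∑ i, (v i) ^ 2 :=
  Real.sq_sqrt (Finset.sum_nonneg fun _ _ => sq_nonneg _)

lemma euclNorm_pos {K : ℕ} {v : Fin K → ℝ} (hv : v ≠ 0) : 0 < euclNorm v := by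
  obtain ⟨i, hi⟩ := Function.ne_iff.mp hv
  refine Real.sqrt_pos.mpr (Finset.sum_pos' (fun _ _ => sq_nonneg _) ⟨i, Finset.mem_univ _, ?_⟩)
  have hi' : v i ≠ 0 := hi
  positivity

/-- scaling of quadratic bounds -/
lemma quad_bounds {K : ℕ} (J : Matrix (Fin K) (Fin K) ℝ) (ζ L : ℝ)
    (h : ∀ z : Fin K → ℝ, euclNorm z = 1 → ζ ≤ z ⬝ᵥ J.mulVec z ∧ z ⬝ᵥ J.mulVec z ≤ L)
    (v : Fin K → ℝ) (hv : v ≠ 0) :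
    ζ * euclNorm v ^ 2 ≤ v ⬝ᵥ J.mulVec v ∧ v ⬝ᵥ J.mulVec v ≤ L * euclNorm v ^ 2 := by
  have hp := euclNorm_pos hv
  set c := euclNorm v with hc
  have hz : euclNorm (c⁻¹ • v) = 1 := by
    have : euclNorm (c⁻¹ • v) ^ 2 = 1 := by
      rw [euclNorm_sq]
      simp only [Pi.smul_apply, smul_eq_mul, mul_pow]
      rw [← Finset.mul_sum, ← euclNorm_sq, ← hc]
      field_simp
    have h0 : 0 ≤ euclNorm (c⁻¹ • v) := Real.sqrt_nonneg _
    nlinarith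
  have := h _ hz
  rw [Matrix.mulVec_smul, dotProduct_smul, smul_dotProduct] at this
  simp only [smul_eq_mul] at this
  set Q := v ⬝ᵥ J.mulVec v
  have e : c⁻¹ * (c⁻¹ * Q) = Q / c ^ 2 := by field_simp
  rw [e, le_div_iff₀ (by positivity), div_le_iff₀ (by positivity)] at this
  exact this

/-- second derivative along a segment -/
lemma seg_deriv {K : ℕ} (F : (Fin K → ℝ) → ℝ) (Θ : Set (Fin K → ℝ))
    (hF : ContDiffOn ℝ 3 F Θ) (J : Matrix (Fin K) (Fin K) ℝ) (w v : Fin K → ℝ)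
    (hseg : ∀ s ∈ Set.Icc (0 : ℝ) 1, w + s • v ∈ Θ)
    (s₀ : ℝ) (hs₀ : s₀ ∈ Set.Ioo (0 : ℝ) 1)
    (hJ : ∀ i j, J i j = -(fderiv ℝ (fun θ' => fderiv ℝ F θ' (Pi.single j 1)) (w + s₀ • v)
      (Pi.single i 1)))
    (hJd : ∀ j, J j j ≠ 0) (hvJ : v ⬝ᵥ J.mulVec v ≠ 0) :
    HasDerivAt (deriv fun s : ℝ => F (w + s • v)) (-(v ⬝ᵥ J.mulVec v)) s₀ := by
  have hline : ∀ s : ℝ, HasDerivAt (fun s : ℝ => w + s • v) v s := by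
    intro s
    simpa using ((hasDerivAt_id s).smul_const v).const_add w
  have hdiff : ∀ j, DifferentiableAt ℝ (fun θ' => fderiv ℝ F θ' (Pi.single j 1)) (w + s₀ • v) := by
    intro j
    by_contra hcon
    apply hJd j
    rw [hJ, fderiv_zero_of_not_differentiableAt hcon]
    simp
  set γ : ℝ → ℝ := fun s => fderiv ℝ F (w + s • v) v with hγ
  have hvsum : v = ∑ j, v j • (Pi.single j (1 : ℝ) : Fin K → ℝ) := by
    ext i
    simp [Finset.sum_apply, Pi.single_apply]
  have hγ' : γ = fun s => ∑ j, v j * fderiv ℝ F (w + s • v) (Pi.single j 1) := by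
    funext s
    simp only [hγ]
    conv_lhs => arg 2; rw [hvsum]
    simp [map_sum]
  have hγd : HasDerivAt γ (-(v ⬝ᵥ J.mulVec v)) s₀ := by
    have h1 : ∀ j, HasDerivAt (fun s : ℝ => fderiv ℝ F (w + s • v) (Pi.single j 1))
        (fderiv ℝ (fun θ' => fderiv ℝ F θ' (Pi.single j 1)) (w + s₀ • v) v) s₀ := by
      intro j
      exact (hdiff j).hasFDerivAt.comp_hasDerivAt s₀ (hline s₀)
    have h2 : HasDerivAt γ (∑ j, v j *
        (fderiv ℝ (fun θ' => fderiv ℝ F θ' (Pi.single j 1)) (w + s₀ • v) v)) s₀ := by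
      rw [hγ']
      exact HasDerivAt.fun_sum fun j _ => (h1 j).const_mul (v j)
    convert h2 using 1
    have h3 : ∀ j, fderiv ℝ (fun θ' => fderiv ℝ F θ' (Pi.single j 1)) (w + s₀ • v) v
        = ∑ i, v i * -(J i j) := by
      intro j
      conv_lhs => arg 2; rw [hvsum]
      rw [map_sum]
      refine Finset.sum_congr rfl fun i _ => ?_
      rw [map_smul, hJ i j]; simp
    simp_rw [h3]
    simp only [dotProduct, Matrix.mulVec, Finset.mul_sum, mul_neg, Finset.sum_neg_distrib]
    rw [Finset.sum_comm]
    congr 1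
    refine Finset.sum_congr rfl fun i _ => Finset.sum_congr rfl fun j _ => ?_
    ring
  have hφ : ContDiffOn ℝ 3 (fun s : ℝ => F (w + s • v)) (Set.Ioo 0 1) := by
    refine hF.comp (f := fun s : ℝ => w + s • v) ?_ ?_
    · exact (contDiff_const.add (contDiff_id.smul contDiff_const)).contDiffOn
    · intro s hs
      exact hseg s ⟨hs.1.le, hs.2.le⟩
  have hcont : ContinuousAt (deriv fun s : ℝ => F (w + s • v)) s₀ :=
    (hφ.continuousOn_deriv_of_isOpen isOpen_Ioo (by norm_num)).continuousAt
      (isOpen_Ioo.mem_nhds hs₀)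
  have hne : ∀ᶠ s in nhdsWithin s₀ {s₀}ᶜ, γ s ≠ 0 :=
    hγd.eventually_ne (by simpa using hvJ)
  have heq : ∀ᶠ s in nhdsWithin s₀ {s₀}ᶜ, deriv (fun s : ℝ => F (w + s • v)) s = γ s := by
    filter_upwards [hne] with s hs
    have hd : DifferentiableAt ℝ F (w + s • v) := by
      by_contra hcon
      apply hs
      simp [hγ, fderiv_zero_of_not_differentiableAt hcon]
    exact (hd.hasFDerivAt.comp_hasDerivAt s (hline s)).deriv
  have heq0 : deriv (fun s : ℝ => F (w + s • v)) s₀ = γ s₀ := by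
    have t1 := hcont.tendsto.mono_left (nhdsWithin_le_nhds (s := {s₀}ᶜ))
    have t2 := hγd.continuousAt.tendsto.mono_left (nhdsWithin_le_nhds (s := {s₀}ᶜ))
    exact tendsto_nhds_unique (t1.congr' heq) t2
  have hev : (deriv fun s : ℝ => F (w + s • v)) =ᶠ[nhds s₀] γ := by
    rw [eventually_nhdsWithin_iff] at heq
    filter_upwards [heq] with s hs
    by_cases h : s = s₀
    · rw [h, heq0]
    · exact hs h
  exact hγd.congr_of_eventuallyEq hev

/-- functions on `[0,1]` with zero second derivative are affine -/
lemma affine_of_deriv2 (g : ℝ → ℝ) (hc : ContinuousOn g (Set.Icc 0 1))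
    (hd : DifferentiableOn ℝ g (Set.Ioo 0 1))
    (h2 : ∀ s ∈ Set.Ioo (0 : ℝ) 1, HasDerivAt (deriv g) 0 s) (s : ℝ) (hs : s ∈ Set.Icc (0 : ℝ) 1) :
    g s = (1 - s) * g 0 + s * g 1 := by
  have h0 : DifferentiableOn ℝ (deriv g) (interior (Set.Icc (0 : ℝ) 1)) := by
    rw [interior_Icc]
    exact fun x hx => (h2 x hx).differentiableAt.differentiableWithinAt
  have h3 : ∀ x ∈ interior (Set.Icc (0 : ℝ) 1), deriv^[2] g x = 0 := by
    rw [interior_Icc]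
    intro x hx
    simpa using (h2 x hx).deriv
  have hcv := convexOn_of_deriv2_nonneg (convex_Icc 0 1) hc (by rwa [interior_Icc]) h0
    (fun x hx => (h3 x hx).ge)
  have hcc := concaveOn_of_deriv2_nonpos (convex_Icc 0 1) hc (by rwa [interior_Icc]) h0
    (fun x hx => (h3 x hx).le)
  have a := hcv.2 (show (0:ℝ) ∈ Set.Icc (0:ℝ) 1 by simp) (show (1:ℝ) ∈ Set.Icc (0:ℝ) 1 by simp)
    (show 0 ≤ 1 - s by linarith [hs.2]) hs.1 (by ring)
  have b := hcc.2 (show (0:ℝ) ∈ Set.Icc (0:ℝ) 1 by simp) (show (1:ℝ) ∈ Set.Icc (0:ℝ) 1 by simp)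
    (show 0 ≤ 1 - s by linarith [hs.2]) hs.1 (by ring)
  simp at a b
  linarith

/-- second difference bound -/
lemma second_diff_of_deriv2 (g g2 : ℝ → ℝ) (C : ℝ) (hc : ContinuousOn g (Set.Icc 0 1))
    (hd : DifferentiableOn ℝ g (Set.Ioo 0 1))
    (h2 : ∀ s ∈ Set.Ioo (0 : ℝ) 1, HasDerivAt (deriv g) (g2 s) s)
    (hC : ∀ s ∈ Set.Ioo (0 : ℝ) 1, g2 s ≤ C) (s : ℝ) (hs : s ∈ Set.Icc (0 : ℝ) (1 / 2)) :
    g (2 * s) - 2 * g s + g 0 ≤ C * s ^ 2 := by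
  set k : ℝ → ℝ := fun s => C / 2 * s ^ 2 - g s with hk
  have hkd : ∀ s ∈ Set.Ioo (0 : ℝ) 1, HasDerivAt k (C * s - deriv g s) s := by
    intro s hs
    have := ((hasDerivAt_pow 2 s).const_mul (C / 2)).sub
      ((hd.differentiableAt (isOpen_Ioo.mem_nhds hs)).hasDerivAt)
    refine this.congr_deriv ?_
    push_cast; ring
  have hk2 : ∀ s ∈ Set.Ioo (0 : ℝ) 1, HasDerivAt (deriv k) (C - g2 s) s := by
    intro s hs
    have : HasDerivAt (fun s => C * s - deriv g s) (C - g2 s) s := by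
      exact (((hasDerivAt_id s).const_mul C).sub (h2 s hs)).congr_deriv (by ring)
    refine this.congr_of_eventuallyEq ?_
    filter_upwards [isOpen_Ioo.mem_nhds hs] with t ht using (hkd t ht).deriv
  have hcv : ConvexOn ℝ (Set.Icc 0 1) k := by
    refine convexOn_of_deriv2_nonneg (convex_Icc 0 1) ?_ ?_ ?_ ?_
    · exact (by fun_prop : Continuous fun s : ℝ => C / 2 * s ^ 2).continuousOn.sub hc
    · rw [interior_Icc]
      exact fun x hx => (hkd x hx).differentiableAt.differentiableWithinAt
    · rw [interior_Icc]
      exact fun x hx => (hk2 x hx).differentiableAt.differentiableWithinAt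
    · rw [interior_Icc]
      intro x hx
      have : deriv^[2] k x = C - g2 x := by simpa using (hk2 x hx).deriv
      rw [this]
      linarith [hC x hx]
  have a := hcv.2 (show (0:ℝ) ∈ Set.Icc (0:ℝ) 1 by simp)
    (show 2 * s ∈ Set.Icc (0:ℝ) 1 from ⟨by linarith [hs.1], by linarith [hs.2]⟩)
    (show (0:ℝ) ≤ 1 / 2 by norm_num) (show (0:ℝ) ≤ 1 / 2 by norm_num) (by norm_num)
  have e : (1 / 2 : ℝ) • (0 : ℝ) + (1 / 2 : ℝ) • (2 * s) = s := by simp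
  rw [e] at a
  simp only [hk, smul_eq_mul] at a
  nlinarith

/-- strictly concave functions along a segment are eventually nonzero near `0` -/
lemma eventually_ne_zero_of_strict (g g2 : ℝ → ℝ) (hc : ContinuousOn g (Set.Icc 0 1))
    (h2 : ∀ s ∈ Set.Ioo (0 : ℝ) 1, HasDerivAt (deriv g) (g2 s) s)
    (hC : ∀ s ∈ Set.Ioo (0 : ℝ) 1, g2 s < 0) :
    ∃ ε > 0, ∀ s, 0 < s → s < ε → g s ≠ 0 := by
  have hcc : StrictConcaveOn ℝ (Set.Icc 0 1) g := by
    refine strictConcaveOn_of_deriv2_neg (convex_Icc 0 1) hc ?_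
    rw [interior_Icc]
    intro x hx
    have : deriv^[2] g x = g2 x := by simpa using (h2 x hx).deriv
    rw [this]
    exact hC x hx
  by_contra! hcon
  obtain ⟨c, hc0, hc1, hcz⟩ := hcon 1 one_pos
  obtain ⟨b, hb0, hb1, hbz⟩ := hcon c hc0
  obtain ⟨a, ha0, ha1, haz⟩ := hcon b hb0
  have := hcc.slope_anti_adjacent (x := a) (y := b) (z := c) ⟨ha0.le, by linarith⟩
    ⟨hc0.le, hc1.le⟩ ha1 hb1
  rw [hcz, hbz, haz] at this
  simp at this


/-! ### elementary inequalities -/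

lemma min_sq_le (t : ℝ) : min (t ^ 2) 1 ≤ 4 * (Real.exp t - 1) ^ 2 := by
  rcases le_or_gt 0 t with ht | ht
  · have h := Real.add_one_le_exp t
    have : t ^ 2 ≤ (Real.exp t - 1) ^ 2 := by
      apply pow_le_pow_left₀ ht; linarith
    have h2 := min_le_left (t ^ 2) 1
    nlinarith [sq_nonneg (Real.exp t - 1)]
  · set u := -t with hu
    have hu0 : 0 < u := by linarith
    have h := Real.add_one_le_exp u
    have he : Real.exp t = (Real.exp u)⁻¹ := by rw [← Real.exp_neg]; simp [hu]
    have h1 : Real.exp t ≤ 1 / (1 + u) := by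
      rw [he, ← one_div]
      exact one_div_le_one_div_of_le (by linarith) (by linarith)
    have h2 : u / (1 + u) ≤ 1 - Real.exp t := by
      have : u / (1 + u) = 1 - 1 / (1 + u) := by field_simp; ring
      linarith
    have h3 : (u / (1 + u)) ^ 2 ≤ (Real.exp t - 1) ^ 2 := by
      have : (Real.exp t - 1) ^ 2 = (1 - Real.exp t) ^ 2 := by ring
      rw [this]
      exact pow_le_pow_left₀ (by positivity) h2 2
    have h4 : min (t ^ 2) 1 ≤ 4 * (u / (1 + u)) ^ 2 := by
      have e : t ^ 2 = u ^ 2 := by simp [hu]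
      rw [e, div_pow, ← mul_div_assoc, le_div_iff₀ (by positivity)]
      rcases le_or_gt u 1 with h | h
      · have := min_le_left (u ^ 2) 1
        have h5 : (1 + u) ^ 2 ≤ 4 := by nlinarith
        calc min (u ^ 2) 1 * (1 + u) ^ 2 ≤ u ^ 2 * 4 := by
              apply mul_le_mul this h5 (by positivity) (by positivity)
          _ = 4 * u ^ 2 := by ring
      · have := min_le_right (u ^ 2) 1
        have h5 : (1 + u) ^ 2 ≤ 4 * u ^ 2 := by nlinarith
        calc min (u ^ 2) 1 * (1 + u) ^ 2 ≤ 1 * (4 * u ^ 2) := by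
              apply mul_le_mul this h5 (by positivity) (by positivity)
          _ = 4 * u ^ 2 := by ring
    linarith

lemma exp_sub_one_le_mul (x : ℝ) : Real.exp x - 1 ≤ x * Real.exp x := by
  have h := Real.add_one_le_exp (-x)
  have h2 := Real.exp_pos x
  have h3 : Real.exp (-x) * Real.exp x = 1 := by rw [← Real.exp_add]; simp
  nlinarith

lemma exp_le_quad (x Y : ℝ) (h : |x| ≤ Y) : Real.exp x ≤ 1 + x + x ^ 2 * Real.exp Y := by
  have h1 := exp_sub_one_le_mul x
  have h0 : x ≤ Y := (le_abs_self x).trans h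
  have hY : 0 ≤ Y := (abs_nonneg x).trans h
  have e1 := Real.exp_le_exp.mpr h0
  have e2 := Real.one_le_exp hY
  have e3 := Real.add_one_le_exp x
  have e4 : Real.exp x - 1 - x ≤ x * (Real.exp x - 1) := by linarith
  rcases le_or_gt 0 x with hx | hx
  · have : x * (Real.exp x - 1) ≤ x * (x * Real.exp x) := mul_le_mul_of_nonneg_left h1 hx
    nlinarith [sq_nonneg x]
  · nlinarith [sq_nonneg x]

lemma min_sub_sq (a b : ℝ) : min ((a - b) ^ 2) 1 ≤ 2 * min (a ^ 2) 1 + 2 * min (b ^ 2) 1 := by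
  rcases le_total (a ^ 2) 1 with h1 | h1 <;> rcases le_total (b ^ 2) 1 with h2 | h2 <;>
    simp only [min_eq_left h1, min_eq_right h1, min_eq_left h2, min_eq_right h2]
  · exact (min_le_left _ _).trans (by nlinarith [sq_nonneg (a + b)])
  · exact (min_le_right _ _).trans (by nlinarith [sq_nonneg a])
  · exact (min_le_right _ _).trans (by nlinarith [sq_nonneg b])
  · exact (min_le_right _ _).trans (by norm_num)

lemma abs_exp_sub_one_le (x Y : ℝ) (h : |x| ≤ Y) : (Real.exp x - 1) ^ 2 ≤ (Y * Real.exp Y) ^ 2 := by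
  have hY : 0 ≤ Y := (abs_nonneg x).trans h
  have a := abs_le.mp h
  apply sq_le_sq'
  · have := Real.add_one_le_exp x
    have := Real.one_le_exp hY
    nlinarith
  · have h1 := exp_sub_one_le_mul x
    have h2 := Real.exp_le_exp.mpr a.2
    rcases le_or_gt 0 x with hx | hx
    · calc _ ≤ x * Real.exp x := h1
        _ ≤ Y * Real.exp Y := mul_le_mul a.2 h2 (Real.exp_pos _).le hY
    · have := Real.exp_le_one_iff.mpr hx.le
      have : 0 ≤ Y * Real.exp Y := mul_nonneg hY (Real.exp_pos _).le
      linarith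

/-! ### abstract exponential family -/

/-- Analytic data of an exponential family on a convex set. -/
structure Fam {K : ℕ} {X : Type*} [MeasurableSpace X] (μ : Measure X) (Θ : Set (Fin K → ℝ))
    (f : (Fin K → ℝ) → X → ℝ) (ψ : (Fin K → ℝ) → ℝ) (B L D C2 Cb : ℝ)
    {ι : Type} [Fintype ι] (θ0 : Fin K → ℝ) (θi : ι → Fin K → ℝ) : Prop where
  conv : Convex ℝ Θ
  meas : ∀ θ ∈ Θ, Measurable (f θ)
  int : ∀ θ ∈ Θ, ∫ x, Real.exp (f θ x) ∂μ = 1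
  aff : ∀ w ∈ Θ, ∀ v ∈ Θ, ∀ s ∈ Set.Icc (0 : ℝ) 1, ∀ x,
    f (w + s • (v - w)) x + ψ (w + s • (v - w)) = (1 - s) * (f w x + ψ w) + s * (f v x + ψ v)
  B0 : 0 ≤ B
  L0 : 0 ≤ L
  C20 : 0 ≤ C2
  Cb0 : 0 ≤ Cb
  bdd : ∀ θ ∈ Θ, |ψ θ| ≤ B
  lip : ∀ v ∈ Θ, ∀ w ∈ Θ, |ψ v - ψ w| ≤ L * ‖v - w‖
  diam : ∀ v ∈ Θ, ∀ w ∈ Θ, ‖v - w‖ ≤ D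
  sec : ∀ w ∈ Θ, ∀ v ∈ Θ, ∀ s ∈ Set.Icc (0 : ℝ) (1 / 2),
    ψ (w + (2 * s) • (v - w)) - 2 * ψ (w + s • (v - w)) + ψ w ≤ C2 * s ^ 2
  h0 : θ0 ∈ Θ
  hi : ∀ i, θi i ∈ Θ
  coord : ∀ z ∈ Θ, ∀ w ∈ Θ, ∃ c : ι → ℝ, (∀ i, |c i| ≤ Cb * ‖z - w‖) ∧ ∀ x,
    (f z x + ψ z) - (f w x + ψ w)
      = ∑ i, c i * ((f (θi i) x + ψ (θi i)) - (f θ0 x + ψ θ0))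

section FamSec

variable {K : ℕ} {X : Type*} [MeasurableSpace X] {μ : Measure X} {Θ : Set (Fin K → ℝ)}
  {f : (Fin K → ℝ) → X → ℝ} {ψ : (Fin K → ℝ) → ℝ} {B L D C2 Cb : ℝ}
  {ι : Type} [Fintype ι] {θ0 : Fin K → ℝ} {θi : ι → Fin K → ℝ}

lemma Fam.integrable (H : Fam μ Θ f ψ B L D C2 Cb θ0 θi) {θ : Fin K → ℝ} (h : θ ∈ Θ) :
    Integrable (fun x => Real.exp (f θ x)) μ := by
  by_contra hcon
  have := H.int θ h
  rw [integral_undef hcon] at this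
  norm_num at this

lemma Fam.mem_seg (H : Fam μ Θ f ψ B L D C2 Cb θ0 θi) {w v : Fin K → ℝ} (hw : w ∈ Θ)
    (hv : v ∈ Θ) {s : ℝ} (hs : s ∈ Set.Icc (0 : ℝ) 1) : w + s • (v - w) ∈ Θ :=
  H.conv.add_smul_sub_mem hw hv hs

/-- second-moment type bound -/
lemma Fam.moment (H : Fam μ Θ f ψ B L D C2 Cb θ0 θi) {w v : Fin K → ℝ} (hw : w ∈ Θ)
    (hv : v ∈ Θ) {s : ℝ} (hs0 : 0 ≤ s) (hs : s ≤ 1 / 2) :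
    Integrable (fun x => Real.exp (f w x)
        * (Real.exp (s * ((f v x + ψ v) - (f w x + ψ w))) - 1) ^ 2) μ ∧
    ∫ x, Real.exp (f w x) * (Real.exp (s * ((f v x + ψ v) - (f w x + ψ w))) - 1) ^ 2 ∂μ
      ≤ (Real.exp (L * D) * (C2 * Real.exp C2) + (L * D * Real.exp (L * D)) ^ 2) * s ^ 2 := by
  have key : ∀ t ∈ Set.Icc (0 : ℝ) 1, ∀ x, Real.exp (f w x)
      * Real.exp (t * ((f v x + ψ v) - (f w x + ψ w)))
      = Real.exp (ψ (w + t • (v - w)) - ψ w) * Real.exp (f (w + t • (v - w)) x) := by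
    intro t ht x
    rw [← Real.exp_add, ← Real.exp_add]
    congr 1
    have := H.aff w hw v hv t ht x
    linarith
  have hs1 : s ∈ Set.Icc (0 : ℝ) 1 := ⟨hs0, by linarith⟩
  have hs2 : 2 * s ∈ Set.Icc (0 : ℝ) 1 := ⟨by linarith, by linarith⟩
  set φ1 := ψ (w + s • (v - w)) - ψ w with hφ1
  set φ2 := ψ (w + (2 * s) • (v - w)) - ψ w with hφ2
  have hexp : (fun x => Real.exp (f w x)
        * (Real.exp (s * ((f v x + ψ v) - (f w x + ψ w))) - 1) ^ 2)
      = fun x => Real.exp φ2 * Real.exp (f (w + (2 * s) • (v - w)) x)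
        - 2 * (Real.exp φ1 * Real.exp (f (w + s • (v - w)) x)) + Real.exp (f w x) := by
    funext x
    rw [← key s hs1 x, ← key (2 * s) hs2 x]
    have : Real.exp (2 * s * ((f v x + ψ v) - (f w x + ψ w)))
        = Real.exp (s * ((f v x + ψ v) - (f w x + ψ w))) ^ 2 := by
      rw [← Real.exp_nat_mul]; congr 1; push_cast; ring
    rw [this]; ring
  have i1 := (H.integrable (H.mem_seg hw hv hs1)).const_mul (Real.exp φ1)
  have i2 := (H.integrable (H.mem_seg hw hv hs2)).const_mul (Real.exp φ2)
  have i0 := H.integrable hw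
  rw [hexp]
  refine ⟨(i2.sub (i1.const_mul 2)).add i0, ?_⟩
  have hval : ∫ x, (Real.exp φ2 * Real.exp (f (w + (2 * s) • (v - w)) x)
        - 2 * (Real.exp φ1 * Real.exp (f (w + s • (v - w)) x)) + Real.exp (f w x)) ∂μ
        = Real.exp φ2 - 2 * Real.exp φ1 + 1 := by
    have e1 := integral_add (i2.sub (i1.const_mul 2)) i0
    have e2 := integral_sub i2 (i1.const_mul 2)
    simp only [Pi.sub_apply] at e1
    rw [e1, e2]
    simp only [integral_const_mul]
    rw [H.int _ (H.mem_seg hw hv hs1), H.int _ (H.mem_seg hw hv hs2), H.int w hw]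
    ring
  rw [hval]
  have hD : 0 ≤ D := (norm_nonneg _).trans (H.diam v hv w hw)
  have hφ1b : |φ1| ≤ L * D * s := by
    have a := H.lip _ (H.mem_seg hw hv hs1) w hw
    have e : w + s • (v - w) - w = s • (v - w) := by abel
    rw [e, norm_smul, Real.norm_of_nonneg hs0] at a
    have b := H.diam v hv w hw
    calc |φ1| ≤ L * (s * ‖v - w‖) := a
      _ ≤ L * (s * D) := by have := H.L0; gcongr
      _ = _ := by ring
  have hLD : 0 ≤ L * D := mul_nonneg H.L0 hD
  have hsec : φ2 ≤ 2 * φ1 + C2 * s ^ 2 := by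
    have := H.sec w hw v hv s ⟨hs0, hs⟩
    simp only [hφ1, hφ2]; linarith
  have hE : Real.exp φ2 ≤ Real.exp φ1 ^ 2 * Real.exp (C2 * s ^ 2) := by
    rw [← Real.exp_nat_mul, ← Real.exp_add]
    apply Real.exp_le_exp.mpr
    push_cast; linarith
  have hs21 : s ^ 2 ≤ 1 := by nlinarith
  have hC2 : Real.exp (C2 * s ^ 2) - 1 ≤ C2 * Real.exp C2 * s ^ 2 := by
    have a := exp_sub_one_le_mul (C2 * s ^ 2)
    have b : Real.exp (C2 * s ^ 2) ≤ Real.exp C2 := by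
      apply Real.exp_le_exp.mpr; nlinarith [H.C20]
    have c : 0 ≤ C2 * s ^ 2 := mul_nonneg H.C20 (sq_nonneg _)
    nlinarith [mul_le_mul_of_nonneg_left b c]
  have h2φ : Real.exp φ1 ^ 2 ≤ Real.exp (L * D) := by
    rw [← Real.exp_nat_mul]
    apply Real.exp_le_exp.mpr
    have := (abs_le.mp hφ1b).2
    push_cast
    nlinarith
  have hsq : (Real.exp φ1 - 1) ^ 2 ≤ (L * D * Real.exp (L * D)) ^ 2 * s ^ 2 := by
    have a := abs_exp_sub_one_le φ1 _ hφ1b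
    have b : Real.exp (L * D * s) ≤ Real.exp (L * D) := by
      apply Real.exp_le_exp.mpr; nlinarith
    refine a.trans ?_
    rw [← mul_pow]
    apply pow_le_pow_left₀ (by positivity)
    calc L * D * s * Real.exp (L * D * s) ≤ L * D * s * Real.exp (L * D) := by gcongr
      _ = _ := by ring
  have hprod : Real.exp φ1 ^ 2 * (Real.exp (C2 * s ^ 2) - 1)
      ≤ Real.exp (L * D) * (C2 * Real.exp C2 * s ^ 2) := by
    apply mul_le_mul h2φ hC2 _ (Real.exp_pos _).le
    have := Real.one_le_exp (mul_nonneg H.C20 (sq_nonneg s))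
    linarith
  nlinarith

/-- the truncation statistic -/
def Qst (f : (Fin K → ℝ) → X → ℝ) (ψ : (Fin K → ℝ) → ℝ) (θ0 : Fin K → ℝ)
    (θi : ι → Fin K → ℝ) (R : ℝ) (x : X) : ℝ :=
  ∑ i, min ((((f (θi i) x + ψ (θi i)) - (f θ0 x + ψ θ0)) / R) ^ 2) 1

/-- the truncation set -/
def Aset (f : (Fin K → ℝ) → X → ℝ) (ψ : (Fin K → ℝ) → ℝ) (θ0 : Fin K → ℝ)
    (θi : ι → Fin K → ℝ) (R : ℝ) : Set X :=
  {x | ∀ i, |(f (θi i) x + ψ (θi i)) - (f θ0 x + ψ θ0)| ≤ R}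

lemma Fam.measA (H : Fam μ Θ f ψ B L D C2 Cb θ0 θi) (R : ℝ) :
    MeasurableSet (Aset f ψ θ0 θi R) := by
  unfold Aset
  rw [Set.setOf_forall]
  refine MeasurableSet.iInter fun i => ?_
  have h1 := H.meas _ (H.hi i)
  have h2 := H.meas _ H.h0
  exact measurableSet_le (by fun_prop) measurable_const

lemma Fam.measQ (H : Fam μ Θ f ψ B L D C2 Cb θ0 θi) (R : ℝ) :
    Measurable (Qst f ψ θ0 θi R) := by
  unfold Qst
  refine Finset.measurable_sum _ fun i _ => ?_
  have h1 := H.meas _ (H.hi i)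
  have h2 := H.meas _ H.h0
  fun_prop

lemma Fam.Qbound (H : Fam μ Θ f ψ B L D C2 Cb θ0 θi) :
    ∃ C3 : ℝ, 0 < C3 ∧ ∀ R : ℝ, 2 ≤ R → ∀ w ∈ Θ,
      Integrable (fun x => Real.exp (f w x) * Qst f ψ θ0 θi R x) μ ∧
      ∫ x, Real.exp (f w x) * Qst f ψ θ0 θi R x ∂μ ≤ C3 / R ^ 2 := by
  set C := Real.exp (L * D) * (C2 * Real.exp C2) + (L * D * Real.exp (L * D)) ^ 2 with hC
  have hC0 : 0 ≤ C := by
    have := H.C20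
    positivity
  refine ⟨Fintype.card ι * (16 * C) + 1, by positivity, fun R hR w hw => ?_⟩
  have hR0 : 0 < R := by linarith
  have hs : (1 / R) ≤ 1 / 2 := one_div_le_one_div_of_le (by norm_num) hR
  have hs0 : 0 ≤ 1 / R := by positivity
  set g : (Fin K → ℝ) → X → ℝ := fun v x => Real.exp (f w x)
        * (Real.exp ((1 / R) * ((f v x + ψ v) - (f w x + ψ w))) - 1) ^ 2 with hg
  have hpt : ∀ x, Real.exp (f w x) * Qst f ψ θ0 θi R x ≤ ∑ i, (8 * g (θi i) x + 8 * g θ0 x) := by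
    intro x
    unfold Qst
    rw [Finset.mul_sum]
    refine Finset.sum_le_sum fun i _ => ?_
    set a := (1 / R) * ((f (θi i) x + ψ (θi i)) - (f w x + ψ w))
    set b := (1 / R) * ((f θ0 x + ψ θ0) - (f w x + ψ w))
    have e : ((f (θi i) x + ψ (θi i)) - (f θ0 x + ψ θ0)) / R = a - b := by
      simp only [a, b]; ring
    rw [e]
    have h1 := min_sub_sq a b
    have h2 := min_sq_le a
    have h3 := min_sq_le b
    have h4 := Real.exp_pos (f w x)
    simp only [hg]
    calc _ ≤ Real.exp (f w x) * (8 * (Real.exp a - 1) ^ 2 + 8 * (Real.exp b - 1) ^ 2) := by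
          apply mul_le_mul_of_nonneg_left _ h4.le; linarith
      _ = _ := by ring
  have hIntg : Integrable (fun x => ∑ i, (8 * g (θi i) x + 8 * g θ0 x)) μ := by
    refine integrable_finset_sum _ fun i _ => ?_
    exact ((H.moment hw (H.hi i) hs0 hs).1.const_mul 8).add
      ((H.moment hw H.h0 hs0 hs).1.const_mul 8)
  have hQ0 : ∀ x, 0 ≤ Real.exp (f w x) * Qst f ψ θ0 θi R x := by
    intro x
    refine mul_nonneg (Real.exp_pos _).le (Finset.sum_nonneg fun i _ => ?_)
    exact le_min (sq_nonneg _) zero_le_one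
  have hmeas : Measurable (fun x => Real.exp (f w x) * Qst f ψ θ0 θi R x) := by
    have h1 := H.meas _ hw
    have h2 := H.measQ R
    fun_prop
  have hI : Integrable (fun x => Real.exp (f w x) * Qst f ψ θ0 θi R x) μ := by
    refine hIntg.mono' hmeas.aestronglyMeasurable (Filter.Eventually.of_forall fun x => ?_)
    rw [Real.norm_of_nonneg (hQ0 x)]
    exact hpt x
  refine ⟨hI, ?_⟩
  calc ∫ x, Real.exp (f w x) * Qst f ψ θ0 θi R x ∂μ
      ≤ ∫ x, ∑ i, (8 * g (θi i) x + 8 * g θ0 x) ∂μ := integral_mono hI hIntg hpt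
    _ = ∑ i, (8 * ∫ x, g (θi i) x ∂μ + 8 * ∫ x, g θ0 x ∂μ) := by
        rw [integral_finset_sum]
        · refine Finset.sum_congr rfl fun i _ => ?_
          rw [integral_add ((H.moment hw (H.hi i) hs0 hs).1.const_mul 8)
            ((H.moment hw H.h0 hs0 hs).1.const_mul 8), integral_const_mul, integral_const_mul]
        · intro i _
          exact ((H.moment hw (H.hi i) hs0 hs).1.const_mul 8).add
            ((H.moment hw H.h0 hs0 hs).1.const_mul 8)
    _ ≤ ∑ _i : ι, (16 * C) * (1 / R) ^ 2 := by
        refine Finset.sum_le_sum fun i _ => ?_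
        have a := (H.moment hw (H.hi i) hs0 hs).2
        have b := (H.moment hw H.h0 hs0 hs).2
        simp only [hg]
        linarith
    _ = (Fintype.card ι * (16 * C)) / R ^ 2 := by
        rw [Finset.sum_const, Finset.card_univ, nsmul_eq_mul]; field_simp
    _ ≤ _ := by
        apply div_le_div_of_nonneg_right _ (by positivity); linarith

lemma Qst_nonneg (R : ℝ) (x : X) : 0 ≤ Qst f ψ θ0 θi R x :=
  Finset.sum_nonneg fun _ _ => le_min (sq_nonneg _) zero_le_one

lemma one_le_Q {R : ℝ} (hR : 0 < R) {x : X} (hx : x ∉ Aset f ψ θ0 θi R) :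
    1 ≤ Qst f ψ θ0 θi R x := by
  simp only [Aset, Set.mem_setOf_eq, not_forall, not_le] at hx
  obtain ⟨i, hi⟩ := hx
  unfold Qst
  refine le_trans ?_ (Finset.single_le_sum (f := fun i =>
    min ((((f (θi i) x + ψ (θi i)) - (f θ0 x + ψ θ0)) / R) ^ 2) 1)
    (fun _ _ => le_min (sq_nonneg _) zero_le_one) (Finset.mem_univ i))
  refine le_min ?_ le_rfl
  rw [div_pow, le_div_iff₀ (by positivity), one_mul, ← sq_abs ((f (θi i) x + ψ (θi i)) - _)]
  exact pow_le_pow_left₀ hR.le hi.le 2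

lemma Q_on_A {R : ℝ} (hR : 0 < R) {x : X} (hx : x ∈ Aset f ψ θ0 θi R) :
    ∑ i, ((f (θi i) x + ψ (θi i)) - (f θ0 x + ψ θ0)) ^ 2 = R ^ 2 * Qst f ψ θ0 θi R x := by
  unfold Qst
  rw [Finset.mul_sum]
  refine Finset.sum_congr rfl fun i _ => ?_
  have h := hx i
  rw [min_eq_left]
  · field_simp
  · rw [div_pow, div_le_one (by positivity), ← sq_abs]
    exact pow_le_pow_left₀ (abs_nonneg _) h 2

/-- mass outside the truncation set -/
lemma Fam.massA (H : Fam μ Θ f ψ B L D C2 Cb θ0 θi) {C3 R : ℝ} (hR : 0 < R)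
    {w : Fin K → ℝ} (hw : w ∈ Θ)
    (hQi : Integrable (fun x => Real.exp (f w x) * Qst f ψ θ0 θi R x) μ)
    (hQ : ∫ x, Real.exp (f w x) * Qst f ψ θ0 θi R x ∂μ ≤ C3 / R ^ 2) :
    ∫ x in (Aset f ψ θ0 θi R)ᶜ, Real.exp (f w x) ∂μ ≤ C3 / R ^ 2 ∧
    1 - C3 / R ^ 2 ≤ ∫ x in Aset f ψ θ0 θi R, Real.exp (f w x) ∂μ ∧
    ∫ x in Aset f ψ θ0 θi R, Real.exp (f w x) ∂μ ≤ 1 := by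
  have hA := H.measA R
  have h1 : ∫ x in (Aset f ψ θ0 θi R)ᶜ, Real.exp (f w x) ∂μ ≤ C3 / R ^ 2 := by
    refine le_trans ?_ hQ
    rw [← integral_indicator hA.compl]
    refine integral_mono ((H.integrable hw).indicator hA.compl) hQi fun x => ?_
    by_cases hx : x ∈ (Aset f ψ θ0 θi R)ᶜ
    · simp only [Set.indicator_of_mem hx]
      have := one_le_Q hR hx
      have := Real.exp_pos (f w x)
      nlinarith
    · simp only [Set.indicator_of_notMem hx]
      exact mul_nonneg (Real.exp_pos _).le (Qst_nonneg _ _)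
  have h2 := integral_add_compl hA (H.integrable hw)
  rw [H.int w hw] at h2
  have h3 : 0 ≤ ∫ x in (Aset f ψ θ0 θi R)ᶜ, Real.exp (f w x) ∂μ :=
    integral_nonneg fun x => (Real.exp_pos _).le
  exact ⟨h1, by linarith, by linarith⟩

end FamSec


section FamSec2

variable {K : ℕ} {X : Type*} [MeasurableSpace X] {μ : Measure X} {Θ : Set (Fin K → ℝ)}
  {f : (Fin K → ℝ) → X → ℝ} {ψ : (Fin K → ℝ) → ℝ} {B L D C2 Cb : ℝ}
  {ι : Type} [Fintype ι] {θ0 : Fin K → ℝ} {θi : ι → Fin K → ℝ}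

lemma Fam.pointA (H : Fam μ Θ f ψ B L D C2 Cb θ0 θi) {R : ℝ} (hR : 2 ≤ R)
    {w z : Fin K → ℝ} (hw : w ∈ Θ) (hz : z ∈ Θ) (hwz : ‖z - w‖ ≤ 1 / R) {x : X}
    (hx : x ∈ Aset f ψ θ0 θi R) :
    |f z x - f w x| ≤ Fintype.card ι * Cb + L ∧
    (f z x - f w x) ^ 2 ≤ 2 * (Fintype.card ι * Cb ^ 2) * Qst f ψ θ0 θi R x + 2 * L ^ 2 / R ^ 2 := by
  obtain ⟨c, hc, hcx⟩ := H.coord z hz w hw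
  have hR0 : 0 < R := by linarith
  have hc' : ∀ i, |c i| ≤ Cb / R := fun i => (hc i).trans (by
    rw [div_eq_mul_one_div]; exact mul_le_mul_of_nonneg_left hwz H.Cb0)
  have hl : |ψ z - ψ w| ≤ L / R := (H.lip z hz w hw).trans (by
    rw [div_eq_mul_one_div]; exact mul_le_mul_of_nonneg_left hwz H.L0)
  have hlL : L / R ≤ L := div_le_self H.L0 (by linarith)
  set S := ∑ i, c i * ((f (θi i) x + ψ (θi i)) - (f θ0 x + ψ θ0)) with hS
  have hy : f z x - f w x = S - (ψ z - ψ w) := by rw [hS, ← hcx x]; ring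
  have hS1 : |S| ≤ Fintype.card ι * Cb := by
    calc |S| ≤ ∑ i, |c i * ((f (θi i) x + ψ (θi i)) - (f θ0 x + ψ θ0))| :=
          Finset.abs_sum_le_sum_abs _ _
      _ ≤ ∑ _i : ι, Cb := by
          refine Finset.sum_le_sum fun i _ => ?_
          rw [abs_mul]
          calc _ ≤ Cb / R * R := mul_le_mul (hc' i) (hx i) (abs_nonneg _)
                  (div_nonneg H.Cb0 hR0.le)
            _ = Cb := by field_simp
      _ = _ := by simp
  have hS2 : S ^ 2 ≤ Fintype.card ι * Cb ^ 2 * Qst f ψ θ0 θi R x := by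
    have h1 := Finset.sum_mul_sq_le_sq_mul_sq Finset.univ c
      (fun i => (f (θi i) x + ψ (θi i)) - (f θ0 x + ψ θ0))
    rw [Q_on_A hR0 hx] at h1
    refine h1.trans ?_
    have h2 : ∑ i, c i ^ 2 ≤ Fintype.card ι * (Cb / R) ^ 2 := by
      calc ∑ i, c i ^ 2 ≤ ∑ _i : ι, (Cb / R) ^ 2 := by
            refine Finset.sum_le_sum fun i _ => ?_
            rw [← sq_abs]; exact pow_le_pow_left₀ (abs_nonneg _) (hc' i) 2
        _ = _ := by simp
    calc _ ≤ Fintype.card ι * (Cb / R) ^ 2 * (R ^ 2 * Qst f ψ θ0 θi R x) :=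
          mul_le_mul_of_nonneg_right h2 (mul_nonneg (sq_nonneg _) (Qst_nonneg _ _))
      _ = _ := by field_simp
  have hl2 : (ψ z - ψ w) ^ 2 ≤ L ^ 2 / R ^ 2 := by
    rw [← sq_abs, ← div_pow]; exact pow_le_pow_left₀ (abs_nonneg _) hl 2
  constructor
  · rw [hy]
    calc _ ≤ |S| + |ψ z - ψ w| := abs_sub _ _
      _ ≤ _ := by linarith
  · rw [hy]
    have : 2 * L ^ 2 / R ^ 2 = 2 * (L ^ 2 / R ^ 2) := by ring
    rw [this]
    nlinarith [sq_nonneg (S + (ψ z - ψ w))]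

lemma exp_neg_mul_le (r y Y : ℝ) (hr : 0 < r) (h : |y| ≤ Y) :
    Real.exp (-(r * y)) ≤ 1 - r * (Real.exp y - 1)
      + (r * Real.exp Y + r ^ 2 * Real.exp (r * Y)) * y ^ 2 := by
  have h1 := exp_le_quad y Y h
  have h2 := exp_le_quad (-(r * y)) (r * Y) (by
    rw [abs_neg, abs_mul, abs_of_pos hr]; exact mul_le_mul_of_nonneg_left h hr.le)
  nlinarith

lemma Fam.Hbound (H : Fam μ Θ f ψ B L D C2 Cb θ0 θi) {C3 : ℝ} (hC3 : 0 < C3)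
    (hQ : ∀ R : ℝ, 2 ≤ R → ∀ w ∈ Θ,
      Integrable (fun x => Real.exp (f w x) * Qst f ψ θ0 θi R x) μ ∧
      ∫ x, Real.exp (f w x) * Qst f ψ θ0 θi R x ∂μ ≤ C3 / R ^ 2) {r : ℝ} (hr : 0 < r) :
    ∃ C : ℝ, 0 < C ∧ ∀ R : ℝ, 2 ≤ R → ∀ w ∈ Θ, ∀ z ∈ Θ, ‖z - w‖ ≤ 1 / R →
      IntegrableOn (fun x => Real.exp (f w x) * Real.exp (-(r * (f z x - f w x))))
        (Aset f ψ θ0 θi R) μ ∧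
      ∫ x in Aset f ψ θ0 θi R, Real.exp (f w x) * Real.exp (-(r * (f z x - f w x))) ∂μ
        ≤ 1 + C / R ^ 2 := by
  set Y : ℝ := Fintype.card ι * Cb + L with hY
  set C4 := r * Real.exp Y + r ^ 2 * Real.exp (r * Y) with hC4
  have hC40 : 0 < C4 := by positivity
  set m : ℝ := 2 * (Fintype.card ι * Cb ^ 2) with hm
  have hm0 : 0 ≤ m := by positivity
  refine ⟨r * C3 + C4 * (m * C3 + 2 * L ^ 2), by positivity, fun R hR w hw z hz hwz => ?_⟩
  have hA := H.measA R
  have hR0 : 0 < R := by linarith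
  obtain ⟨hQi, hQb⟩ := hQ R hR w hw
  obtain ⟨-, hw1, hw2⟩ := H.massA hR0 hw hQi hQb
  obtain ⟨-, hz1, hz2⟩ := H.massA hR0 hz (hQ R hR z hz).1 (hQ R hR z hz).2
  have hIw := H.integrable hw
  have hIz := H.integrable hz
  set g : X → ℝ := fun x => (1 + r + C4 * (2 * L ^ 2 / R ^ 2)) * Real.exp (f w x)
    - r * Real.exp (f z x) + C4 * m * (Real.exp (f w x) * Qst f ψ θ0 θi R x) with hg
  have hgi : Integrable g μ :=
    ((hIw.const_mul _).sub (hIz.const_mul _)).add (hQi.const_mul _)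
  have hpt : ∀ x ∈ Aset f ψ θ0 θi R,
      Real.exp (f w x) * Real.exp (-(r * (f z x - f w x))) ≤ g x := by
    intro x hx
    obtain ⟨h1, h2⟩ := H.pointA hR hw hz hwz hx
    have h3 := exp_neg_mul_le r _ Y hr h1
    have h4 : Real.exp (f z x) = Real.exp (f w x) * Real.exp (f z x - f w x) := by
      rw [← Real.exp_add]; congr 1; ring
    have h5 := mul_le_mul_of_nonneg_left h3 (Real.exp_pos (f w x)).le
    have h6 := mul_le_mul_of_nonneg_left h2 (mul_nonneg hC40.le (Real.exp_pos (f w x)).le)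
    refine h5.trans ?_
    simp only [hg]
    rw [h4]
    nlinarith
  have hmz := H.meas z hz
  have hmw := H.meas w hw
  have hI : IntegrableOn (fun x => Real.exp (f w x) * Real.exp (-(r * (f z x - f w x))))
        (Aset f ψ θ0 θi R) μ := by
    refine Integrable.mono' hgi.integrableOn (by
      apply Measurable.aestronglyMeasurable; fun_prop) ?_
    refine (ae_restrict_mem hA).mono fun x hx => ?_
    rw [Real.norm_of_nonneg (by positivity)]
    exact hpt x hx
  refine ⟨hI, ?_⟩
  calc _ ≤ ∫ x in Aset f ψ θ0 θi R, g x ∂μ := setIntegral_mono_on hI hgi.integrableOn hA hpt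
    _ = (1 + r + C4 * (2 * L ^ 2 / R ^ 2)) * ∫ x in Aset f ψ θ0 θi R, Real.exp (f w x) ∂μ
        - r * ∫ x in Aset f ψ θ0 θi R, Real.exp (f z x) ∂μ
        + C4 * m * ∫ x in Aset f ψ θ0 θi R, Real.exp (f w x) * Qst f ψ θ0 θi R x ∂μ := by
        simp only [hg]
        have hsub : Integrable (fun x => (1 + r + C4 * (2 * L ^ 2 / R ^ 2)) * Real.exp (f w x)
          - r * Real.exp (f z x)) μ := (hIw.const_mul _).sub (hIz.const_mul _)
        rw [integral_add hsub.integrableOn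
          (hQi.const_mul _).integrableOn, integral_sub (hIw.const_mul _).integrableOn
          (hIz.const_mul _).integrableOn, integral_const_mul, integral_const_mul,
          integral_const_mul]
    _ ≤ (1 + r + C4 * (2 * L ^ 2 / R ^ 2)) * 1 - r * (1 - C3 / R ^ 2)
        + C4 * m * (C3 / R ^ 2) := by
        have hq : ∫ x in Aset f ψ θ0 θi R, Real.exp (f w x) * Qst f ψ θ0 θi R x ∂μ
            ≤ C3 / R ^ 2 := (setIntegral_le_integral hQi (Filter.Eventually.of_forall fun x =>
              mul_nonneg (Real.exp_pos _).le (Qst_nonneg _ _))).trans hQb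
        have := H.L0
        have a1 : 0 ≤ (1 + r + C4 * (2 * L ^ 2 / R ^ 2)) := by positivity
        have e1 := mul_le_mul_of_nonneg_left hw2 a1
        have e2 := mul_le_mul_of_nonneg_left hz1 hr.le
        have e3 := mul_le_mul_of_nonneg_left hq (mul_nonneg hC40.le hm0)
        linarith
    _ = _ := by field_simp; ring

end FamSec2

section FamSec3

variable {K : ℕ} {X : Type*} [MeasurableSpace X] {μ : Measure X} {Θ : Set (Fin K → ℝ)}
  {f : (Fin K → ℝ) → X → ℝ} {ψ : (Fin K → ℝ) → ℝ} {B L D C2 Cb : ℝ}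
  {ι : Type} [Fintype ι] {θ0 : Fin K → ℝ} {θi : ι → Fin K → ℝ}

/-- normalising ratio -/
def kd (μ : Measure X) (f : (Fin K → ℝ) → X → ℝ) (A : Set X) (θ0 θ : Fin K → ℝ) : ℝ :=
  (∫ x in A, Real.exp (f θ0 x) ∂μ) / ∫ x in A, Real.exp (f θ x) ∂μ

open Classical in
/-- truncated densities -/
def qd (μ : Measure X) (f : (Fin K → ℝ) → X → ℝ) (A : Set X) (θ0 θ : Fin K → ℝ) (x : X) : ℝ :=
  if x ∈ A then kd μ f A θ0 θ * Real.exp (f θ x) else Real.exp (f θ0 x)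

lemma kd_ge {A : Set X} {θ : Fin K → ℝ} {ρ : ℝ} (hρ : 0 < ρ)
    (h0 : ρ ≤ ∫ x in A, Real.exp (f θ0 x) ∂μ) (h1 : ρ ≤ ∫ x in A, Real.exp (f θ x) ∂μ)
    (h2 : ∫ x in A, Real.exp (f θ x) ∂μ ≤ 1) : ρ ≤ kd μ f A θ0 θ := by
  unfold kd
  rw [le_div_iff₀ (by linarith)]
  nlinarith

lemma qd_pos {A : Set X} {θ : Fin K → ℝ} (hk : 0 < kd μ f A θ0 θ) (x : X) :
    0 < qd μ f A θ0 θ x := by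
  unfold qd
  split_ifs
  · exact mul_pos hk (Real.exp_pos _)
  · exact Real.exp_pos _

lemma qd_meas {A : Set X} {θ : Fin K → ℝ} (hA : MeasurableSet A) (h0 : Measurable (f θ0))
    (h : Measurable (f θ)) : Measurable (qd μ f A θ0 θ) := by
  unfold qd
  exact Measurable.ite hA (by fun_prop) (by fun_prop)

lemma qd_int {A : Set X} {θ : Fin K → ℝ} (hA : MeasurableSet A)
    (h0 : Integrable (fun x => Real.exp (f θ0 x)) μ)
    (h : Integrable (fun x => Real.exp (f θ x)) μ)
    (hi : ∫ x, Real.exp (f θ0 x) ∂μ = 1) (hpos : 0 < ∫ x in A, Real.exp (f θ x) ∂μ) :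
    Integrable (qd μ f A θ0 θ) μ ∧ ∫ x, qd μ f A θ0 θ x ∂μ = 1 := by
  have e1 : Set.EqOn (qd μ f A θ0 θ) (fun x => kd μ f A θ0 θ * Real.exp (f θ x)) A :=
    fun x hx => by simp [qd, hx]
  have e2 : Set.EqOn (qd μ f A θ0 θ) (fun x => Real.exp (f θ0 x)) Aᶜ :=
    fun x hx => by
      have : x ∉ A := hx
      simp [qd, this]
  have i1 : IntegrableOn (qd μ f A θ0 θ) A μ :=
    (h.const_mul _).integrableOn.congr_fun e1.symm hA
  have i2 : IntegrableOn (qd μ f A θ0 θ) Aᶜ μ :=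
    h0.integrableOn.congr_fun e2.symm hA.compl
  have i3 : Integrable (qd μ f A θ0 θ) μ := by
    rw [← integrableOn_univ, ← Set.union_compl_self A]; exact i1.union i2
  refine ⟨i3, ?_⟩
  rw [← integral_add_compl hA i3, setIntegral_congr_fun hA e1, setIntegral_congr_fun hA.compl e2,
    integral_const_mul]
  rw [← integral_add_compl hA h0] at hi
  rw [kd, div_mul_cancel₀ _ hpos.ne', hi]

lemma inv_one_sub_le {u : ℝ} (h0 : 0 ≤ u) (h : u ≤ 1 / 2) : (1 - u)⁻¹ ≤ Real.exp (2 * u) := by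
  have := Real.add_one_le_exp (2 * u)
  rw [inv_le_comm₀ (by linarith) (Real.exp_pos _)]
  rw [inv_eq_one_div, div_le_iff₀ (Real.exp_pos _)]
  nlinarith

lemma renyi_integrable {p q : X → ℝ} (hp : Integrable p μ) (hq : Integrable q μ)
    (hpm : Measurable p) (hqm : Measurable q)
    (hp0 : ∀ x, 0 < p x) (hq0 : ∀ x, 0 < q x) {β : ℝ} (h0 : 0 < β) (h1 : β < 1) :
    Integrable (fun x => p x * (q x / p x) ^ β) μ := by
  refine Integrable.mono' (hp.add hq) (by
    apply Measurable.aestronglyMeasurable; fun_prop) (Filter.Eventually.of_forall fun x => ?_)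
  have hp := hp0 x
  have hq := hq0 x
  rw [Real.norm_of_nonneg (by positivity)]
  have : (q x / p x) ^ β ≤ 1 + q x / p x := by
    rcases le_total (q x / p x) 1 with h | h
    · have := Real.rpow_le_one (by positivity : 0 ≤ q x / p x) h h0.le
      have : 0 ≤ q x / p x := by positivity
      linarith
    · have := Real.rpow_le_rpow_of_exponent_le h h1.le
      rw [Real.rpow_one] at this
      linarith
  calc _ ≤ p x * (1 + q x / p x) := mul_le_mul_of_nonneg_left this hp.le
    _ = _ := by simp only [Pi.add_apply]; field_simp

lemma Fam.key (H : Fam μ Θ f ψ B L D C2 Cb θ0 θi) {lam : ℝ} (hl0 : 0 < lam) (hl1 : lam < 1) :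
    ∃ R0 C : ℝ, 2 ≤ R0 ∧ 0 < C ∧ ∀ R : ℝ, R0 ≤ R →
      (∀ θ ∈ Θ, (∀ x, 0 < qd μ f (Aset f ψ θ0 θi R) θ0 θ x) ∧
        Measurable (qd μ f (Aset f ψ θ0 θi R) θ0 θ) ∧
        ∫ x, qd μ f (Aset f ψ θ0 θi R) θ0 θ x ∂μ = 1) ∧
      ∀ θs ∈ Θ, ∀ θ ∈ Θ, ∀ z ∈ Θ, ‖z - (θs + (1 - lam) • (θ - θs))‖ ≤ 1 / R →
        0 < ∫ x, Real.exp (f θs x) *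
          (qd μ f (Aset f ψ θ0 θi R) θ0 θ x / Real.exp (f θs x)) ^ (1 - lam) ∂μ ∧
        Integrable (fun x => Real.exp (f θs x) * (qd μ f (Aset f ψ θ0 θi R) θ0 θ x /
          qd μ f (Aset f ψ θ0 θi R) θ0 z x) ^ ((1 - lam) / lam)) μ ∧
        ∫ x, Real.exp (f θs x) * (qd μ f (Aset f ψ θ0 θi R) θ0 θ x /
          qd μ f (Aset f ψ θ0 θi R) θ0 z x) ^ ((1 - lam) / lam) ∂μ ≤
        (∫ x, Real.exp (f θs x) *
          (qd μ f (Aset f ψ θ0 θi R) θ0 θ x / Real.exp (f θs x)) ^ (1 - lam) ∂μ) ^ (1 / lam)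
          * Real.exp (C / R ^ 2) := by
  obtain ⟨C3, hC3, hQ⟩ := H.Qbound
  set β := 1 - lam with hβ
  have hβ0 : 0 < β := by linarith
  have hβ1 : β < 1 := by linarith
  set r := β / lam with hr
  have hr0 : 0 < r := by positivity
  obtain ⟨C, hC, hH⟩ := H.Hbound hC3 hQ hr0
  set C' := C3 * Real.exp (2 * B / lam) with hC'
  have hC'0 : 0 < C' := by positivity
  refine ⟨max 2 (Real.sqrt (2 * C3)), 2 * C3 * (2 / lam + r) + C + C', le_max_left _ _,
    by positivity, fun R hR => ?_⟩
  have hR2 : 2 ≤ R := (le_max_left _ _).trans hR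
  have hR0 : 0 < R := by linarith
  have hRC : 2 * C3 ≤ R ^ 2 := by
    have := (le_max_right _ _).trans hR
    rw [Real.sqrt_le_left hR0.le] at this
    exact this
  set u := C3 / R ^ 2 with hu
  have hu0 : 0 < u := by positivity
  have hu1 : u ≤ 1 / 2 := by rw [hu, div_le_iff₀ (by positivity)]; linarith
  set ρ := 1 - u with hρ
  have hρ0 : 0 < ρ := by linarith
  have hρ1 : ρ ≤ 1 := by linarith
  set A := Aset f ψ θ0 θi R with hAdef
  have hA : MeasurableSet A := H.measA R
  have hmass : ∀ θ ∈ Θ, ∫ x in Aᶜ, Real.exp (f θ x) ∂μ ≤ u ∧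
      ρ ≤ ∫ x in A, Real.exp (f θ x) ∂μ ∧ ∫ x in A, Real.exp (f θ x) ∂μ ≤ 1 :=
    fun θ hθ => H.massA hR0 hθ (hQ R hR2 θ hθ).1 (hQ R hR2 θ hθ).2
  have hk : ∀ θ ∈ Θ, ρ ≤ kd μ f A θ0 θ := fun θ hθ =>
    kd_ge hρ0 (hmass θ0 H.h0).2.1 (hmass θ hθ).2.1 (hmass θ hθ).2.2
  have hkz : ∀ θ ∈ Θ, ∀ z ∈ Θ, kd μ f A θ0 θ / kd μ f A θ0 z ≤ ρ⁻¹ := by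
    intro θ hθ z hz
    have a0 := (hmass θ0 H.h0).2.1
    have a1 := (hmass θ hθ).2.1
    have a2 := (hmass z hz).2.1
    have a3 := (hmass z hz).2.2
    have : kd μ f A θ0 θ / kd μ f A θ0 z
        = (∫ x in A, Real.exp (f z x) ∂μ) / ∫ x in A, Real.exp (f θ x) ∂μ := by
      unfold kd
      have : (∫ x in A, Real.exp (f θ0 x) ∂μ) ≠ 0 := by linarith
      have : (∫ x in A, Real.exp (f θ x) ∂μ) ≠ 0 := by linarith
      have : (∫ x in A, Real.exp (f z x) ∂μ) ≠ 0 := by linarith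
      field_simp
    rw [this, inv_eq_one_div]
    exact div_le_div₀ (by norm_num) a3 hρ0 a1
  have hqpos : ∀ θ ∈ Θ, ∀ x, 0 < qd μ f A θ0 θ x := fun θ hθ x =>
    qd_pos (hρ0.trans_le (hk θ hθ)) x
  have hqm : ∀ θ ∈ Θ, Measurable (qd μ f A θ0 θ) := fun θ hθ =>
    qd_meas hA (H.meas _ H.h0) (H.meas _ hθ)
  have hqi : ∀ θ ∈ Θ, Integrable (qd μ f A θ0 θ) μ ∧ ∫ x, qd μ f A θ0 θ x ∂μ = 1 :=
    fun θ hθ => qd_int hA (H.integrable H.h0) (H.integrable hθ) (H.int _ H.h0)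
      (hρ0.trans_le (hmass θ hθ).2.1)
  refine ⟨fun θ hθ => ⟨hqpos θ hθ, hqm θ hθ, (hqi θ hθ).2⟩, fun θs hs θ hθ z hz hzw => ?_⟩
  set w := θs + β • (θ - θs) with hw'
  have hw : w ∈ Θ := H.mem_seg hs hθ ⟨hβ0.le, hβ1.le⟩
  obtain ⟨hHi, hHb⟩ := hH R hR2 w hw z hz hzw
  set lG := ψ w - lam * ψ θs - β * ψ θ with hlG
  have haff : ∀ x, lam * f θs x + β * f θ x = lG + f w x := by
    intro x
    have := H.aff θs hs θ hθ β ⟨hβ0.le, hβ1.le⟩ x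
    rw [← hw'] at this
    have e : 1 - β = lam := by rw [hβ]; ring
    rw [e] at this
    rw [hlG]; linarith
  have hlGb : -(2 * B) ≤ lG := by
    have h1 := abs_le.mp (H.bdd w hw)
    have h2 := abs_le.mp (H.bdd θs hs)
    have h3 := abs_le.mp (H.bdd θ hθ)
    have e : lam + β = 1 := by rw [hβ]; ring
    have e1 := mul_le_mul_of_nonneg_left h2.2 hl0.le
    have e2 := mul_le_mul_of_nonneg_left h3.2 hβ0.le
    have e3 : lam * B + β * B = B := by rw [← add_mul, e, one_mul]
    rw [hlG]; linarith
  set I := ∫ x, Real.exp (f θs x) * (qd μ f A θ0 θ x / Real.exp (f θs x)) ^ β ∂μ with hI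
  have hms := H.meas θs hs
  have hIi : Integrable (fun x => Real.exp (f θs x) *
      (qd μ f A θ0 θ x / Real.exp (f θs x)) ^ β) μ :=
    renyi_integrable (H.integrable hs) (hqi θ hθ).1 (by fun_prop) (hqm θ hθ)
      (fun x => Real.exp_pos _) (hqpos θ hθ) hβ0 hβ1
  have hIlow : ρ ^ 2 * Real.exp lG ≤ I := by
    have h1 : ∫ x in A, (ρ * Real.exp lG) * Real.exp (f w x) ∂μ ≤ I := by
      refine le_trans ?_ (setIntegral_le_integral (s := A) hIi (Filter.Eventually.of_forall
        fun x => ?_))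
      · refine setIntegral_mono_on ((H.integrable hw).const_mul _).integrableOn
          hIi.integrableOn hA fun x hx => ?_
        have e1 : qd μ f A θ0 θ x = kd μ f A θ0 θ * Real.exp (f θ x) := by simp [qd, hx]
        have hk0 := hk θ hθ
        rw [e1, mul_div_assoc, ← Real.exp_sub, Real.mul_rpow (by linarith) (Real.exp_pos _).le,
          ← Real.exp_mul]
        have e2 : ρ ≤ kd μ f A θ0 θ ^ β := by
          calc ρ = ρ ^ (1 : ℝ) := (Real.rpow_one _).symm
            _ ≤ ρ ^ β := Real.rpow_le_rpow_of_exponent_ge hρ0 hρ1 hβ1.le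
            _ ≤ _ := Real.rpow_le_rpow hρ0.le hk0 hβ0.le
        have e3 : Real.exp (f θs x) * Real.exp ((f θ x - f θs x) * β)
            = Real.exp lG * Real.exp (f w x) := by
          rw [← Real.exp_add, ← Real.exp_add, ← haff]
          congr 1; rw [hβ]; ring
        calc ρ * Real.exp lG * Real.exp (f w x)
            = ρ * (Real.exp (f θs x) * Real.exp ((f θ x - f θs x) * β)) := by rw [e3]; ring
          _ ≤ kd μ f A θ0 θ ^ β * (Real.exp (f θs x) * Real.exp ((f θ x - f θs x) * β)) :=
            mul_le_mul_of_nonneg_right e2 (by positivity)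
          _ = _ := by ring
      · have := hqpos θ hθ x
        simp only [Pi.zero_apply]; positivity
    rw [integral_const_mul] at h1
    refine le_trans ?_ h1
    have := mul_le_mul_of_nonneg_left (hmass w hw).2.1
      (mul_pos hρ0 (Real.exp_pos lG)).le
    linarith
  have hI0 : 0 < I := lt_of_lt_of_le (by positivity) hIlow
  refine ⟨hI0, ?_⟩
  set Fn : X → ℝ := fun x => Real.exp (f θs x) * (qd μ f A θ0 θ x / qd μ f A θ0 z x) ^ r with hFn
  have hFm : Measurable Fn := by
    have := hqm θ hθ
    have := hqm z hz
    fun_prop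
  have hF0 : ∀ x, 0 ≤ Fn x := fun x => by
    have := hqpos θ hθ x
    have := hqpos z hz x
    simp only [hFn]; positivity
  have hFA : ∀ x ∈ A, Fn x ≤ (ρ⁻¹ ^ r * Real.exp (lG / lam)) *
      (Real.exp (f w x) * Real.exp (-(r * (f z x - f w x)))) := by
    intro x hx
    have e1 : qd μ f A θ0 θ x = kd μ f A θ0 θ * Real.exp (f θ x) := by simp [qd, hx]
    have e2 : qd μ f A θ0 z x = kd μ f A θ0 z * Real.exp (f z x) := by simp [qd, hx]
    have hkθ := hk θ hθ
    have hkz0 := hk z hz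
    simp only [hFn]
    rw [e1, e2, mul_div_mul_comm, ← Real.exp_sub, Real.mul_rpow
      (div_nonneg (by linarith) (by linarith)) (Real.exp_pos _).le, ← Real.exp_mul]
    have e3 : (kd μ f A θ0 θ / kd μ f A θ0 z) ^ r ≤ ρ⁻¹ ^ r :=
      Real.rpow_le_rpow (div_nonneg (by linarith) (by linarith)) (hkz θ hθ z hz) hr0.le
    have e4 : Real.exp (f θs x) * Real.exp ((f θ x - f z x) * r)
        = Real.exp (lG / lam) * (Real.exp (f w x) * Real.exp (-(r * (f z x - f w x)))) := by
      rw [← Real.exp_add, ← Real.exp_add, ← Real.exp_add]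
      congr 1
      have := haff x
      have e5 : lG = lam * f θs x + β * f θ x - f w x := by linarith
      rw [e5, hr]
      field_simp
      rw [hβ]; ring
    calc _ = (kd μ f A θ0 θ / kd μ f A θ0 z) ^ r *
          (Real.exp (f θs x) * Real.exp ((f θ x - f z x) * r)) := by ring
      _ ≤ ρ⁻¹ ^ r * (Real.exp (f θs x) * Real.exp ((f θ x - f z x) * r)) :=
          mul_le_mul_of_nonneg_right e3 (by positivity)
      _ = _ := by rw [e4]; ring
  have hFAc : Set.EqOn Fn (fun x => Real.exp (f θs x)) Aᶜ := by
    intro x hx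
    have hx' : x ∉ A := hx
    simp only [hFn, qd, hx', if_false]
    rw [div_self (Real.exp_pos _).ne', Real.one_rpow, mul_one]
  have i1 : IntegrableOn Fn A μ := by
    refine Integrable.mono' (hHi.const_mul (ρ⁻¹ ^ r * Real.exp (lG / lam)))
      hFm.aestronglyMeasurable ((ae_restrict_mem hA).mono fun x hx => ?_)
    rw [Real.norm_of_nonneg (hF0 x)]
    exact hFA x hx
  have i2 : IntegrableOn Fn Aᶜ μ := (H.integrable hs).integrableOn.congr_fun hFAc.symm hA.compl
  have i3 : Integrable Fn μ := by
    rw [← integrableOn_univ, ← Set.union_compl_self A]; exact i1.union i2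
  refine ⟨i3, ?_⟩
  have hv : R ^ 2 ≠ 0 := by positivity
  rw [← integral_add_compl hA i3, setIntegral_congr_fun hA.compl hFAc]
  have b1 : ∫ x in A, Fn x ∂μ ≤ (ρ⁻¹ ^ r * Real.exp (lG / lam)) * (1 + C / R ^ 2) := by
    calc _ ≤ ∫ x in A, (ρ⁻¹ ^ r * Real.exp (lG / lam)) *
      (Real.exp (f w x) * Real.exp (-(r * (f z x - f w x)))) ∂μ :=
          setIntegral_mono_on i1 (hHi.const_mul _) hA hFA
      _ = (ρ⁻¹ ^ r * Real.exp (lG / lam)) * _ := integral_const_mul _ _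
      _ ≤ _ := mul_le_mul_of_nonneg_left hHb (by positivity)
  have b2 := (hmass θs hs).1
  have hρi : ρ⁻¹ ≤ Real.exp (2 * u) := inv_one_sub_le hu0.le hu1
  have hρr : ρ⁻¹ ^ r ≤ Real.exp (2 * u * r) := by
    rw [Real.exp_mul]; exact Real.rpow_le_rpow (by positivity) hρi hr0.le
  have b3 : u ≤ Real.exp (lG / lam) * (C' / R ^ 2) := by
    have : Real.exp (-(2 * B / lam)) ≤ Real.exp (lG / lam) := by
      apply Real.exp_le_exp.mpr
      rw [← neg_div]
      exact div_le_div_of_nonneg_right hlGb hl0.le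
    calc u = Real.exp (-(2 * B / lam)) * (C' / R ^ 2) := by
          rw [hC', hu, mul_div_assoc', mul_comm C3, ← mul_assoc, ← Real.exp_add]
          simp
      _ ≤ _ := mul_le_mul_of_nonneg_right this (by positivity)
  have b4 : Real.exp (lG / lam) ≤ I ^ (1 / lam) * Real.exp (2 * u * (2 / lam)) := by
    have h1 : Real.exp lG ≤ I * (ρ⁻¹) ^ 2 := by
      rw [inv_pow, ← div_eq_mul_inv, le_div_iff₀ (by positivity)]; linarith
    have h2 : Real.exp lG ≤ I * Real.exp (2 * (2 * u)) := by
      refine h1.trans (mul_le_mul_of_nonneg_left ?_ hI0.le)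
      have : Real.exp (2 * (2 * u)) = Real.exp (2 * u) ^ 2 := by
        rw [← Real.exp_nat_mul]; norm_num
      rw [this]
      exact pow_le_pow_left₀ (by positivity) hρi 2
    calc Real.exp (lG / lam) = Real.exp lG ^ (1 / lam) := by
          rw [← Real.exp_mul]; congr 1; ring
      _ ≤ (I * Real.exp (2 * (2 * u))) ^ (1 / lam) :=
          Real.rpow_le_rpow (Real.exp_pos _).le h2 (by positivity)
      _ = _ := by
          rw [Real.mul_rpow hI0.le (Real.exp_pos _).le, ← Real.exp_mul]
          congr 2; ring
  have h1r : 1 ≤ Real.exp (2 * u * r) := Real.one_le_exp (by positivity)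
  calc _ ≤ (ρ⁻¹ ^ r * Real.exp (lG / lam)) * (1 + C / R ^ 2)
        + Real.exp (lG / lam) * (C' / R ^ 2) := by linarith
    _ ≤ (Real.exp (2 * u * r) * Real.exp (lG / lam)) * (1 + C / R ^ 2)
        + (Real.exp (2 * u * r) * Real.exp (lG / lam)) * (C' / R ^ 2) := by
        apply add_le_add
        · gcongr
        · have : Real.exp (lG / lam) ≤ Real.exp (2 * u * r) * Real.exp (lG / lam) :=
            le_mul_of_one_le_left (Real.exp_pos _).le h1r
          gcongr
    _ = Real.exp (lG / lam) * (Real.exp (2 * u * r) * ((C + C') / R ^ 2 + 1)) := by ring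
    _ ≤ (I ^ (1 / lam) * Real.exp (2 * u * (2 / lam))) *
        (Real.exp (2 * u * r) * Real.exp ((C + C') / R ^ 2)) := by
        have := Real.add_one_le_exp ((C + C') / R ^ 2)
        gcongr
    _ = _ := by
        rw [mul_assoc, ← Real.exp_add, ← Real.exp_add]
        congr 2
        rw [hu]; ring

end FamSec3

/-! ### product bound, nets, and the core conclusion -/

lemma event_bound {X : Type*} [MeasurableSpace X] {μ : Measure X} [SigmaFinite μ] (n : ℕ)
    (p0 p qa qb : X → ℝ) (r : ℝ) (hr : 0 < r) (h0 : ∀ x, 0 ≤ p0 x) (h1 : ∀ x, p0 x ≤ p x)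
    (ha : ∀ x, 0 < qa x) (hb : ∀ x, 0 < qb x) (ham : Measurable qa) (hbm : Measurable qb)
    (hF : Integrable (fun x => p x * (qa x / qb x) ^ r) μ) :
    ∫ xn in {xn : Fin n → X | -Real.log (∏ t, qa (xn t)) ≤ -Real.log (∏ t, qb (xn t))},
      ∏ t, p0 (xn t) ∂(Measure.pi fun _ : Fin n => μ)
      ≤ (∫ x, p x * (qa x / qb x) ^ r ∂μ) ^ n := by
  have hFn : Integrable (fun xn : Fin n → X => ∏ t, (p (xn t) * (qa (xn t) / qb (xn t)) ^ r))
      (Measure.pi fun _ : Fin n => μ) :=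
    Integrable.fintype_prod (f := fun (_ : Fin n) x => p x * (qa x / qb x) ^ r) fun _ => hF
  have hFe : ∫ xn : Fin n → X, ∏ t, (p (xn t) * (qa (xn t) / qb (xn t)) ^ r)
      ∂(Measure.pi fun _ : Fin n => μ) = (∫ x, p x * (qa x / qb x) ^ r ∂μ) ^ n := by
    rw [integral_fintype_prod_eq_prod (f := fun (_ : Fin n) x => p x * (qa x / qb x) ^ r)]
    simp
  have hE : MeasurableSet {xn : Fin n → X |
      -Real.log (∏ t, qa (xn t)) ≤ -Real.log (∏ t, qb (xn t))} := by
    apply measurableSet_le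
    · refine (Real.measurable_log.comp (Finset.measurable_prod _ fun t _ => ?_)).neg
      exact ham.comp (measurable_pi_apply t)
    · refine (Real.measurable_log.comp (Finset.measurable_prod _ fun t _ => ?_)).neg
      exact hbm.comp (measurable_pi_apply t)
  have hnn : ∀ xn : Fin n → X, 0 ≤ ∏ t, (p (xn t) * (qa (xn t) / qb (xn t)) ^ r) := fun xn =>
    Finset.prod_nonneg fun t _ => mul_nonneg ((h0 _).trans (h1 _))
      (Real.rpow_nonneg (div_nonneg (ha _).le (hb _).le) _)
  rw [← hFe]
  refine le_trans (integral_mono_of_nonneg ?_ hFn.integrableOn ?_)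
    (setIntegral_le_integral hFn (Filter.Eventually.of_forall hnn))
  · exact Filter.Eventually.of_forall fun xn => Finset.prod_nonneg fun t _ => h0 _
  · refine (ae_restrict_mem hE).mono fun xn hxn => ?_
    simp only [Set.mem_ofPred_eq, neg_le_neg_iff] at hxn
    have hpa : 0 < ∏ t, qa (xn t) := Finset.prod_pos fun t _ => ha _
    have hpb : 0 < ∏ t, qb (xn t) := Finset.prod_pos fun t _ => hb _
    rw [Real.log_le_log_iff hpb hpa] at hxn
    have h2 : ∏ t, (p (xn t) * (qa (xn t) / qb (xn t)) ^ r)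
        = (∏ t, p (xn t)) * ((∏ t, qa (xn t)) / ∏ t, qb (xn t)) ^ r := by
      rw [Finset.prod_mul_distrib, ← Finset.prod_div_distrib,
        Real.finsetProd_rpow _ _ fun t _ => div_nonneg (ha _).le (hb _).le]
    show ∏ t, p0 (xn t) ≤ ∏ t, (p (xn t) * (qa (xn t) / qb (xn t)) ^ r)
    rw [h2]
    calc ∏ t, p0 (xn t) ≤ ∏ t, p (xn t) :=
          Finset.prod_le_prod (fun t _ => h0 _) fun t _ => h1 _
      _ ≤ _ := le_mul_of_one_le_right (Finset.prod_nonneg fun t _ => (h0 _).trans (h1 _))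
          (Real.one_le_rpow ((one_le_div hpb).mpr hxn) hr.le)

lemma exists_net {K : ℕ} {Θ : Set (Fin K → ℝ)} (hc : IsCompact Θ) :
    ∃ C : ℝ, 0 < C ∧ ∀ s : ℝ, 1 ≤ s → ∃ N : Finset (Fin K → ℝ), (∀ z ∈ N, z ∈ Θ) ∧
      (N.card : ℝ) ≤ C * s ^ K ∧ ∀ w ∈ Θ, ∃ z ∈ N, ‖z - w‖ ≤ 1 / s := by
  obtain ⟨D, hD0, hD⟩ := hc.isBounded.exists_pos_norm_le
  refine ⟨(2 * D + 2) ^ K, by positivity, fun s hs => ?_⟩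
  classical
  have hs0 : 0 < s := by linarith
  set g : (Fin K → ℝ) → (Fin K → ℤ) := fun θ i => ⌊θ i * s⌋ with hg
  set S : Finset (Fin K → ℤ) := Fintype.piFinset fun _ => Finset.Icc ⌊-(D * s)⌋ ⌊D * s⌋ with hS
  have hgS : ∀ θ ∈ Θ, g θ ∈ S := by
    intro θ hθ
    simp only [hS, Fintype.mem_piFinset, Finset.mem_Icc, hg]
    intro i
    have h1 : |θ i| ≤ D := (norm_le_pi_norm θ i).trans (hD θ hθ)
    have h2 := abs_le.mp h1
    constructor
    · apply Int.floor_le_floor; nlinarith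
    · apply Int.floor_le_floor; nlinarith
  set S' : Finset (Fin K → ℤ) := S.filter fun k => ∃ θ ∈ Θ, g θ = k with hS'
  have hex : ∀ k ∈ S', ∃ θ ∈ Θ, g θ = k := fun k hk => (Finset.mem_filter.mp hk).2
  set rep : (Fin K → ℤ) → (Fin K → ℝ) := fun k =>
    if h : ∃ θ ∈ Θ, g θ = k then h.choose else 0 with hrep
  have hreps : ∀ k ∈ S', rep k ∈ Θ ∧ g (rep k) = k := by
    intro k hk
    have h := hex k hk
    simp only [hrep, dif_pos h]
    exact h.choose_spec
  refine ⟨S'.image rep, ?_, ?_, ?_⟩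
  · intro z hz
    obtain ⟨k, hk, rfl⟩ := Finset.mem_image.mp hz
    exact (hreps k hk).1
  · have h1 : (S'.image rep).card ≤ S.card :=
      Finset.card_image_le.trans (Finset.card_filter_le _ _)
    have h2 : S.card = (⌊D * s⌋ + 1 - ⌊-(D * s)⌋).toNat ^ K := by
      simp [hS, Fintype.card_piFinset]
    have hDs : 0 ≤ D * s := by positivity
    have h3 : (((⌊D * s⌋ + 1 - ⌊-(D * s)⌋).toNat : ℕ) : ℝ) ≤ (2 * D + 2) * s := by
      have a1 := Int.floor_le (D * s)
      have a2 := Int.lt_floor_add_one (-(D * s))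
      have a3 : (0 : ℤ) ≤ ⌊D * s⌋ + 1 - ⌊-(D * s)⌋ := by
        have : ⌊-(D * s)⌋ ≤ ⌊D * s⌋ := Int.floor_le_floor (by linarith)
        omega
      have a4 : (((⌊D * s⌋ + 1 - ⌊-(D * s)⌋).toNat : ℕ) : ℝ)
          = ((⌊D * s⌋ + 1 - ⌊-(D * s)⌋ : ℤ) : ℝ) := by
        rw [← Int.cast_natCast, Int.toNat_of_nonneg a3]
      rw [a4]; push_cast; nlinarith
    calc ((S'.image rep).card : ℝ) ≤ S.card := by exact_mod_cast h1
      _ = (((⌊D * s⌋ + 1 - ⌊-(D * s)⌋).toNat : ℕ) : ℝ) ^ K := by rw [h2]; push_cast; rfl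
      _ ≤ ((2 * D + 2) * s) ^ K := pow_le_pow_left₀ (Nat.cast_nonneg _) h3 K
      _ = _ := mul_pow _ _ _
  · intro w hw
    have hk : g w ∈ S' := Finset.mem_filter.mpr ⟨hgS w hw, w, hw, rfl⟩
    refine ⟨rep (g w), Finset.mem_image_of_mem _ hk, ?_⟩
    obtain ⟨-, h⟩ := hreps _ hk
    rw [pi_norm_le_iff_of_nonneg (by positivity)]
    intro i
    have hi : ⌊rep (g w) i * s⌋ = ⌊w i * s⌋ := congrFun h i
    have := Int.abs_sub_lt_one_of_floor_eq_floor hi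
    rw [Pi.sub_apply, Real.norm_eq_abs, le_div_iff₀ hs0]
    calc _ = |rep (g w) i * s - w i * s| := by
          rw [← sub_mul, abs_mul, abs_of_pos hs0]
      _ ≤ 1 := this.le

/-- The core conclusion used in the final assembly. -/
def Core {K : ℕ} {X : Type*} [MeasurableSpace X] (μ : Measure X) (Θ : Set (Fin K → ℝ))
    (p : (Fin K → ℝ) → X → ℝ) (lam : ℝ) : Prop :=
  ∃ Cc : ℝ, 0 < Cc ∧ ∃ N0 : ℕ, ∀ n : ℕ, N0 ≤ n → ∃ M : ℕ, 0 < M ∧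
    (M : ℝ) ≤ Cc * (n : ℝ) ^ ((K : ℝ) / 2) ∧ ∃ qc : Fin M → X → ℝ,
      (∀ i x, 0 ≤ qc i x) ∧ (∀ i, Measurable (qc i)) ∧ (∀ i, ∫ x, qc i x ∂μ = 1) ∧
      ∀ θs ∈ Θ, ∀ i, ∃ j,
        ∫ xn in {xn : Fin n → X |
            -Real.log (∏ t, qc i (xn t)) ≤ -Real.log (∏ t, qc j (xn t))},
          ∏ t, p θs (xn t) ∂(Measure.pi fun _ : Fin n => μ)
        ≤ Cc * Real.exp (-(((1 - lam) / lam) * (n * renyiDiv μ lam (p θs) (qc i))))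

lemma Fam.core {K : ℕ} {X : Type*} [MeasurableSpace X] {μ : Measure X} [SigmaFinite μ]
    {Θ : Set (Fin K → ℝ)}
    {f : (Fin K → ℝ) → X → ℝ} {ψ : (Fin K → ℝ) → ℝ} {B L D C2 Cb : ℝ}
    {ι : Type} [Fintype ι] {θ0 : Fin K → ℝ} {θi : ι → Fin K → ℝ}
    (H : Fam μ Θ f ψ B L D C2 Cb θ0 θi) (hc : IsCompact Θ) {lam : ℝ} (hl0 : 0 < lam)
    (hl1 : lam < 1) (p : (Fin K → ℝ) → X → ℝ) (hp0 : ∀ θ ∈ Θ, ∀ x, 0 ≤ p θ x)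
    (hpf : ∀ θ ∈ Θ, ∀ x, p θ x ≤ Real.exp (f θ x))
    (hpae : ∀ θ ∈ Θ, p θ =ᵐ[μ] fun x => Real.exp (f θ x)) : Core μ Θ p lam := by
  obtain ⟨R0, C, hR0, hC, hkey⟩ := H.key hl0 hl1
  obtain ⟨Cn, hCn, hnet⟩ := exists_net hc
  refine ⟨max Cn (Real.exp C), lt_max_of_lt_left hCn, ⌈R0 ^ 2⌉₊, fun n hn => ?_⟩
  have hnR : R0 ^ 2 ≤ n := Nat.ceil_le.mp hn
  set R := Real.sqrt n with hR
  have hRR : R0 ≤ R := Real.le_sqrt_of_sq_le hnR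
  have hn0 : (0 : ℝ) ≤ n := Nat.cast_nonneg n
  have hRsq : R ^ 2 = n := Real.sq_sqrt hn0
  have hnpos : (0 : ℝ) < n := by nlinarith
  obtain ⟨N, hN, hcard, hcov⟩ := hnet R (by linarith)
  obtain ⟨hq, hk⟩ := hkey R hRR
  have hne : N.Nonempty := by
    obtain ⟨z, hz, -⟩ := hcov θ0 H.h0
    exact ⟨z, hz⟩
  let e := N.equivFin
  set pt : Fin N.card → (Fin K → ℝ) := fun i => (e.symm i : Fin K → ℝ) with hpt
  have hptΘ : ∀ i, pt i ∈ Θ := fun i => hN _ (e.symm i).2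
  refine ⟨N.card, hne.card_pos, ?_, fun i => qd μ f (Aset f ψ θ0 θi R) θ0 (pt i),
    fun i x => ((hq _ (hptΘ i)).1 x).le, fun i => (hq _ (hptΘ i)).2.1,
    fun i => (hq _ (hptΘ i)).2.2, fun θs hs i => ?_⟩
  · have h1 : R ^ K = (n : ℝ) ^ ((K : ℝ) / 2) := by
      rw [hR, Real.sqrt_eq_rpow, ← Real.rpow_natCast, ← Real.rpow_mul hn0]
      congr 1; ring
    rw [← h1]
    refine hcard.trans (mul_le_mul_of_nonneg_right (le_max_left _ _) (by positivity))
  · have hw : θs + (1 - lam) • (pt i - θs) ∈ Θ :=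
      H.mem_seg hs (hptΘ i) ⟨by linarith, by linarith⟩
    obtain ⟨z, hz, hzw⟩ := hcov _ hw
    refine ⟨e ⟨z, hz⟩, ?_⟩
    have hptz : pt (e ⟨z, hz⟩) = z := by simp [hpt]
    beta_reduce
    rw [hptz]
    obtain ⟨hI0, hFi, hFb⟩ := hk θs hs (pt i) (hptΘ i) z (hN z hz) hzw
    have hr0 : 0 < (1 - lam) / lam := div_pos (by linarith) hl0
    refine (event_bound n (p θs) (fun x => Real.exp (f θs x)) _ _ _ hr0 (hp0 θs hs) (hpf θs hs)
      (hq _ (hptΘ i)).1 (hq _ (hN z hz)).1 (hq _ (hptΘ i)).2.1 (hq _ (hN z hz)).2.1 hFi).trans ?_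
    have hJ0 : 0 ≤ ∫ x, Real.exp (f θs x) * (qd μ f (Aset f ψ θ0 θi R) θ0 (pt i) x /
          qd μ f (Aset f ψ θ0 θi R) θ0 z x) ^ ((1 - lam) / lam) ∂μ := by
      refine integral_nonneg fun x => ?_
      have h1 := (hq _ (hptΘ i)).1 x
      have h2 := (hq _ (hN z hz)).1 x
      simp only [Pi.zero_apply]; positivity
    refine (pow_le_pow_left₀ hJ0 hFb n).trans ?_
    have hren : renyiDiv μ lam (p θs) (qd μ f (Aset f ψ θ0 θi R) θ0 (pt i))
        = -(1 / (1 - lam)) * Real.log (∫ x, Real.exp (f θs x) *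
          (qd μ f (Aset f ψ θ0 θi R) θ0 (pt i) x / Real.exp (f θs x)) ^ (1 - lam) ∂μ) := by
      unfold renyiDiv
      congr 2
      refine integral_congr_ae ((hpae θs hs).mono fun x hx => ?_)
      simp only [hx]
    rw [hren]
    set I := ∫ x, Real.exp (f θs x) *
          (qd μ f (Aset f ψ θ0 θi R) θ0 (pt i) x / Real.exp (f θs x)) ^ (1 - lam) ∂μ with hI
    have e1 : I ^ (1 / lam) = Real.exp (Real.log I * (1 / lam)) := Real.rpow_def_of_pos hI0 _
    rw [mul_pow, e1, ← Real.exp_nat_mul, ← Real.exp_nat_mul, hRsq]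
    have e2 : (n : ℝ) * (C / n) = C := by field_simp
    have e3 : (n : ℝ) * (Real.log I * (1 / lam))
        = -((1 - lam) / lam * (n * (-(1 / (1 - lam)) * Real.log I))) := by
      have : 1 - lam ≠ 0 := by linarith
      field_simp
    rw [e2, e3, mul_comm]
    exact mul_le_mul_of_nonneg_right (le_max_right _ _) (Real.exp_pos _).le

/-! ### final assembly -/

lemma eventually_small (K : ℕ) (hK : 0 < K) (α c0 γ C : ℝ) (hα : 1 < α) (hγ : 1 < γ * α)
    (hC : 0 < C) (REG : ℕ → ℝ)
    (hREG : ∀ n : ℕ, 1 ≤ n → α * ((K : ℝ) / 2 * Real.log n + c0) ≤ REG n) :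
    ∀ᶠ n : ℕ in Filter.atTop, C * (n : ℝ) ^ ((K : ℝ) / 2) * Real.exp (-(γ * REG n)) < 1 := by
  have hγ0 : 0 < γ := by
    by_contra h
    nlinarith
  set δ := (γ * α - 1) * ((K : ℝ) / 2) with hδ
  have hK' : (0 : ℝ) < K := by exact_mod_cast hK
  have hδ0 : 0 < δ := mul_pos (by linarith) (by positivity)
  have ht : Filter.Tendsto (fun n : ℕ => C * Real.exp (-(γ * α * c0)) * (n : ℝ) ^ (-δ))
      Filter.atTop (nhds (C * Real.exp (-(γ * α * c0)) * 0)) :=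
    ((tendsto_rpow_neg_atTop hδ0).comp tendsto_natCast_atTop_atTop).const_mul _
  rw [mul_zero] at ht
  filter_upwards [ht.eventually (gt_mem_nhds one_pos), Filter.eventually_ge_atTop 1] with n h1 h2
  refine lt_of_le_of_lt ?_ h1
  have hn : (0 : ℝ) < n := by exact_mod_cast h2
  have e1 : Real.exp (-(γ * REG n)) ≤
      Real.exp (-(γ * α * c0)) * (n : ℝ) ^ (-(γ * α * ((K : ℝ) / 2))) := by
    rw [Real.rpow_def_of_pos hn, ← Real.exp_add]
    apply Real.exp_le_exp.mpr
    have := mul_le_mul_of_nonneg_left (hREG n h2) hγ0.le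
    linarith
  calc _ ≤ C * (n : ℝ) ^ ((K : ℝ) / 2) *
        (Real.exp (-(γ * α * c0)) * (n : ℝ) ^ (-(γ * α * ((K : ℝ) / 2)))) :=
        mul_le_mul_of_nonneg_left e1 (by positivity)
    _ = C * Real.exp (-(γ * α * c0)) *
        ((n : ℝ) ^ ((K : ℝ) / 2) * (n : ℝ) ^ (-(γ * α * ((K : ℝ) / 2)))) := by ring
    _ = _ := by
        rw [← Real.rpow_add hn]
        congr 2
        rw [hδ]; ring

lemma eventually_large (K : ℕ) (hK : 0 < K) (α c0 : ℝ) (hα : 1 < α) (REG : ℕ → ℝ)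
    (hREG : ∀ n : ℕ, 1 ≤ n → α * ((K : ℝ) / 2 * Real.log n + c0) ≤ REG n) :
    ∀ᶠ n : ℕ in Filter.atTop, 1 ≤ REG n := by
  have hK' : (0 : ℝ) < K := by exact_mod_cast hK
  have ht : Filter.Tendsto (fun n : ℕ => Real.log n) Filter.atTop Filter.atTop :=
    Real.tendsto_log_atTop.comp tendsto_natCast_atTop_atTop
  filter_upwards [ht.eventually_ge_atTop ((|c0| + 1) / ((K : ℝ) / 2)),
    Filter.eventually_ge_atTop 1] with n h1 h2
  refine le_trans ?_ (hREG n h2)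
  rw [div_le_iff₀ (by positivity)] at h1
  have := neg_abs_le c0
  nlinarith

lemma assemble {K : ℕ} (hK : 0 < K) {X : Type*} [MeasurableSpace X]
    (μ : Measure X) [SigmaFinite μ] (Θ : Set (Fin K → ℝ))
    (p : (Fin K → ℝ) → X → ℝ)
    (hp_nonneg : ∀ θ ∈ Θ, ∀ x, 0 ≤ p θ x)
    (hp_prob : ∀ θ ∈ Θ, ∫ x, p θ x ∂μ = 1)
    (α lam c0 : ℝ) (hα : 1 < α) (hlam : lam ∈ Set.Ioc 0 (1 - α⁻¹))
    (hcore : Core μ Θ p lam) (REG : ℕ → ℝ)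
    (hREG : ∀ n : ℕ, 1 ≤ n → α * ((K : ℝ) / 2 * Real.log n + c0) ≤ REG n) :
    ∃ N : ℕ, ∀ n : ℕ, N ≤ n →
      ∃ (ιc : Type) (_ : Countable ιc) (qc : ιc → X → ℝ) (Lc : ιc → ℝ)
        (estc : (Fin n → X) → ιc),
        (∀ i x, 0 ≤ qc i x) ∧ (∀ i, Measurable (qc i)) ∧
        (∀ i, ∫ x, qc i x ∂μ = 1) ∧ (∀ i, 0 ≤ Lc i) ∧
        (∑' i, Real.exp (-Lc i)) ≤ 1 ∧
        (∀ (xn : Fin n → X) (i : ιc),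
          -Real.log (∏ t, qc (estc xn) (xn t)) + α * Lc (estc xn)
            ≤ -Real.log (∏ t, qc i (xn t)) + α * Lc i) ∧
        ∀ θs ∈ Θ,
          (∫ xn, (∏ t, p θs (xn t)) * renyiDiv μ lam (p θs) (qc (estc xn))
              ∂(Measure.pi fun _ : Fin n => μ)) ≤ REG n / n
          ∧ ∀ b : ℝ, 0 < b →
            (∫ xn in {xn : Fin n → X | REG n / n + b < renyiDiv μ lam (p θs) (qc (estc xn))},
              (∏ t, p θs (xn t)) ∂(Measure.pi fun _ : Fin n => μ))
              < Real.exp (-(n * b) / α) := by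
  obtain ⟨Cc, hCc, N0, hN0⟩ := hcore
  have hα0 : 0 < α := by linarith
  have hl0 := hlam.1
  have hαi : 0 < α⁻¹ := by positivity
  have hl1 : lam < 1 := by linarith [hlam.2]
  set γ := (1 - lam) / lam with hγdef
  have hγ : α⁻¹ < γ := by
    rw [hγdef, lt_div_iff₀ hl0]
    have := hlam.2
    nlinarith
  set γ' := (γ + α⁻¹) / 2 with hγ'
  have h1 : α⁻¹ < γ' := by linarith
  have h2 : γ' < γ := by linarith
  have hγα : ∀ g : ℝ, α⁻¹ < g → 1 < g * α := fun g hg => by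
    have := mul_lt_mul_of_pos_right hg hα0
    rwa [inv_mul_cancel₀ hα0.ne'] at this
  have ev1 := eventually_small K hK α c0 γ (Cc * Cc) hα (hγα _ hγ) (by positivity) REG hREG
  have ev2 := eventually_small K hK α c0 γ' (Cc * Cc * (γ - γ')⁻¹ * Real.exp γ') hα (hγα _ h1)
    (by have : 0 < γ - γ' := by linarith
        positivity) REG hREG
  have ev3 := eventually_large K hK α c0 hα REG hREG
  obtain ⟨N1, hN1⟩ := Filter.eventually_atTop.mp ((ev1.and ev2).and ev3)
  refine ⟨max 1 (max N0 N1), fun n hn => ?_⟩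
  have hn1 : 1 ≤ n := (le_max_left _ _).trans hn
  have hnN0 : N0 ≤ n := (le_max_left _ _).trans ((le_max_right _ _).trans hn)
  have hnN1 : N1 ≤ n := (le_max_right _ _).trans ((le_max_right _ _).trans hn)
  obtain ⟨⟨hs1, hs2⟩, hs3⟩ := hN1 n hnN1
  obtain ⟨M, hM, hMb, qc, hq0, hqm, hqi, hqE⟩ := hN0 n hnN0
  have hn0 : (0 : ℝ) < n := by exact_mod_cast hn1
  have : Nonempty (Fin M) := ⟨⟨0, hM⟩⟩
  have hM0 : (0 : ℝ) < M := by exact_mod_cast hM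
  have hest : ∀ xn : Fin n → X, ∃ i, ∀ j,
      -Real.log (∏ t, qc i (xn t)) ≤ -Real.log (∏ t, qc j (xn t)) := fun xn =>
    Finite.exists_min fun i => -Real.log (∏ t, qc i (xn t))
  choose estc hestc using hest
  refine ⟨Fin M, inferInstance, qc, fun _ => Real.log M, estc, hq0, hqm, hqi, fun _ => ?_, ?_,
    fun xn i => by linarith [hestc xn i], fun θs hs => ?_⟩
  · exact Real.log_nonneg (by exact_mod_cast hM)
  · rw [tsum_fintype, Finset.sum_const, Real.exp_neg, Real.exp_log hM0, Finset.card_univ,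
      Fintype.card_fin, nsmul_eq_mul, mul_inv_cancel₀ hM0.ne']
  set ν : Measure (Fin n → X) := Measure.pi fun _ : Fin n => μ with hν
  set g : (Fin n → X) → ℝ := fun xn => ∏ t, p θs (xn t) with hg
  have hpi : Integrable (p θs) μ := by
    by_contra hcon
    have := hp_prob θs hs
    rw [integral_undef hcon] at this
    norm_num at this
  have hgi : Integrable g ν :=
    Integrable.fintype_prod (f := fun (_ : Fin n) x => p θs x) fun _ => hpi
  have hg1 : ∫ xn, g xn ∂ν = 1 := by
    rw [hg, hν, integral_fintype_prod_eq_prod (f := fun (_ : Fin n) x => p θs x)]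
    simp [hp_prob θs hs]
  have hg0 : ∀ xn, 0 ≤ g xn := fun xn => Finset.prod_nonneg fun t _ => hp_nonneg θs hs _
  choose jj hjj using hqE θs hs
  set E : Fin M → Set (Fin n → X) := fun i => {xn : Fin n → X |
            -Real.log (∏ t, qc i (xn t)) ≤ -Real.log (∏ t, qc (jj i) (xn t))} with hE
  have hEm : ∀ i, MeasurableSet (E i) := by
    intro i
    apply measurableSet_le
    · refine (Real.measurable_log.comp (Finset.measurable_prod _ fun t _ => ?_)).neg
      exact (hqm _).comp (measurable_pi_apply t)
    · refine (Real.measurable_log.comp (Finset.measurable_prod _ fun t _ => ?_)).neg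
      exact (hqm _).comp (measurable_pi_apply t)
  have hestE : ∀ xn, xn ∈ E (estc xn) := fun xn => hestc xn _
  set dv : Fin M → ℝ := fun i => renyiDiv μ lam (p θs) (qc i) with hdv
  have hjj' : ∀ i, ∫ xn in E i, g xn ∂ν ≤ Cc * Real.exp (-(γ * (n * dv i))) := hjj
  have hGi : ∀ i, Integrable ((E i).indicator g) ν := fun i => hgi.indicator (hEm i)
  have hGe : ∀ i, ∫ xn, (E i).indicator g xn ∂ν ≤ Cc * Real.exp (-(γ * (n * dv i))) := fun i => by
    rw [integral_indicator (hEm i)]; exact hjj' i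
  have hG0 : ∀ i xn, 0 ≤ (E i).indicator g xn := fun i xn =>
    Set.indicator_nonneg (fun xn _ => hg0 xn) xn
  have hGest : ∀ xn, (E (estc xn)).indicator g xn = g xn := fun xn =>
    Set.indicator_of_mem (hestE xn) _
  classical
  constructor
  · skip
    set s0 := (REG n - 1) / n with hs0
    have hs00 : 0 ≤ s0 := div_nonneg (by linarith) hn0.le
    show ∫ xn, g xn * dv (estc xn) ∂ν ≤ REG n / n
    by_cases hIntg : Integrable (fun xn => g xn * dv (estc xn)) ν
    swap
    · rw [integral_undef hIntg]; exact div_nonneg (by linarith) hn0.le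
    set Bad := Finset.univ.filter fun i : Fin M => s0 < dv i with hBad
    have hup : Integrable (fun xn => s0 * g xn + ∑ i ∈ Bad, dv i * (E i).indicator g xn) ν :=
      (hgi.const_mul _).add (integrable_finsetSum _ fun i _ => (hGi i).const_mul _)
    have hle : ∫ xn, g xn * dv (estc xn) ∂ν ≤
        ∫ xn, (s0 * g xn + ∑ i ∈ Bad, dv i * (E i).indicator g xn) ∂ν := by
      refine integral_mono hIntg hup fun xn => ?_
      show g xn * dv (estc xn) ≤ s0 * g xn + ∑ i ∈ Bad, dv i * (E i).indicator g xn
      have hterm : ∀ i ∈ Bad, 0 ≤ dv i * (E i).indicator g xn := fun i hi =>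
        mul_nonneg (hs00.trans (Finset.mem_filter.mp hi).2.le) (hG0 i xn)
      by_cases hb : s0 < dv (estc xn)
      · have hmem : estc xn ∈ Bad := Finset.mem_filter.mpr ⟨Finset.mem_univ _, hb⟩
        have := Finset.single_le_sum hterm hmem
        rw [hGest] at this
        have := mul_nonneg hs00 (hg0 xn)
        linarith
      · have := Finset.sum_nonneg hterm
        have := mul_le_mul_of_nonneg_left (not_lt.mp hb) (hg0 xn)
        linarith
    refine hle.trans ?_
    rw [integral_add (hgi.const_mul _) (integrable_finsetSum _ fun i _ => (hGi i).const_mul _),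
      integral_const_mul, hg1, integral_finsetSum _ fun i _ => (hGi i).const_mul _]
    simp only [integral_const_mul]
    have hη : 0 < γ - γ' := by linarith
    have hterm : ∀ i ∈ Bad, dv i * ∫ xn, (E i).indicator g xn ∂ν
        ≤ Cc * (γ - γ')⁻¹ * Real.exp γ' * Real.exp (-(γ' * REG n)) / n := by
      intro i hi
      have hdi := (Finset.mem_filter.mp hi).2
      rw [hs0, div_lt_iff₀ hn0] at hdi
      have hd0 : 0 ≤ dv i := hs00.trans (Finset.mem_filter.mp hi).2.le
      rw [le_div_iff₀ hn0]
      set y := dv i * n with hy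
      have a1 : (γ - γ') * y ≤ Real.exp ((γ - γ') * y) := by
        linarith [Real.add_one_le_exp ((γ - γ') * y)]
      have a2 : y ≤ (γ - γ')⁻¹ * Real.exp ((γ - γ') * y) := by
        rw [inv_mul_eq_div, le_div_iff₀ hη]; linarith
      have hy0 : 0 ≤ y := mul_nonneg hd0 hn0.le
      have hγ'0 : 0 < γ' := hαi.trans h1
      calc dv i * (∫ xn, (E i).indicator g xn ∂ν) * n
          = y * ∫ xn, (E i).indicator g xn ∂ν := by rw [hy]; ring
        _ ≤ y * (Cc * Real.exp (-(γ * (n * dv i)))) := mul_le_mul_of_nonneg_left (hGe i) hy0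
        _ = y * (Cc * Real.exp (-(γ * y))) := by rw [hy, mul_comm (dv i)]
        _ ≤ ((γ - γ')⁻¹ * Real.exp ((γ - γ') * y)) * (Cc * Real.exp (-(γ * y))) :=
            mul_le_mul_of_nonneg_right a2 (by positivity)
        _ = Cc * (γ - γ')⁻¹ * Real.exp (-(γ' * y)) := by
            have : Real.exp (-(γ' * y)) = Real.exp ((γ - γ') * y) * Real.exp (-(γ * y)) := by
              rw [← Real.exp_add]; congr 1; ring
            rw [this]; ring
        _ ≤ Cc * (γ - γ')⁻¹ * (Real.exp γ' * Real.exp (-(γ' * REG n))) := by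
            rw [← Real.exp_add]
            apply mul_le_mul_of_nonneg_left _ (by positivity)
            apply Real.exp_le_exp.mpr
            nlinarith
        _ = _ := by ring
    have hsum : ∑ i ∈ Bad, dv i * ∫ xn, (E i).indicator g xn ∂ν ≤ 1 / n := by
      calc _ ≤ ∑ _i ∈ Bad, Cc * (γ - γ')⁻¹ * Real.exp γ' * Real.exp (-(γ' * REG n)) / n :=
            Finset.sum_le_sum hterm
        _ = Bad.card * (Cc * (γ - γ')⁻¹ * Real.exp γ' * Real.exp (-(γ' * REG n)) / n) := by
            rw [Finset.sum_const, nsmul_eq_mul]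
        _ ≤ (Cc * (n : ℝ) ^ ((K : ℝ) / 2)) *
            (Cc * (γ - γ')⁻¹ * Real.exp γ' * Real.exp (-(γ' * REG n)) / n) := by
            apply mul_le_mul_of_nonneg_right _ (by positivity)
            refine le_trans ?_ hMb
            have : Bad.card ≤ M := by
              simpa using Finset.card_le_univ Bad
            exact_mod_cast this
        _ = (Cc * Cc * (γ - γ')⁻¹ * Real.exp γ' * (n : ℝ) ^ ((K : ℝ) / 2) *
            Real.exp (-(γ' * REG n))) / n := by ring
        _ ≤ 1 / n := div_le_div_of_nonneg_right hs2.le hn0.le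
    calc _ ≤ s0 * 1 + 1 / n := by linarith
      _ = REG n / n := by rw [hs0]; field_simp; ring
  · intro b hb
    show ∫ xn in {xn : Fin n → X | REG n / n + b < dv (estc xn)}, g xn ∂ν < _
    set Bad := Finset.univ.filter fun i : Fin M => REG n / n + b < dv i with hBad
    set U : Set (Fin n → X) := ⋃ i ∈ Bad, E i with hU
    have hUm : MeasurableSet U := Finset.measurableSet_biUnion _ fun i _ => hEm i
    have hsub : {xn : Fin n → X | REG n / n + b < dv (estc xn)} ⊆ U := by
      intro xn hxn
      exact Set.mem_biUnion (Finset.mem_coe.mpr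
        (Finset.mem_filter.mpr ⟨Finset.mem_univ _, hxn⟩)) (hestE xn)
    have l1 : ∫ xn in {xn : Fin n → X | REG n / n + b < dv (estc xn)}, g xn ∂ν
        ≤ ∫ xn in U, g xn ∂ν :=
      setIntegral_mono_set hgi.integrableOn (Filter.Eventually.of_forall hg0)
        (LE.le.eventuallyLE hsub)
    have l2 : ∫ xn in U, g xn ∂ν ≤ ∑ i ∈ Bad, ∫ xn, (E i).indicator g xn ∂ν := by
      rw [← integral_indicator hUm, ← integral_finsetSum _ fun i _ => hGi i]
      refine integral_mono (hgi.indicator hUm) (integrable_finsetSum _ fun i _ => hGi i)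
        fun xn => ?_
      show U.indicator g xn ≤ ∑ i ∈ Bad, (E i).indicator g xn
      by_cases hx : xn ∈ U
      · rw [Set.indicator_of_mem hx]
        obtain ⟨i, hi, hxi⟩ := Set.mem_iUnion₂.mp hx
        have := Finset.single_le_sum (f := fun i => (E i).indicator g xn)
          (fun i _ => hG0 i xn) hi
        rwa [Set.indicator_of_mem hxi] at this
      · rw [Set.indicator_of_notMem hx]
        exact Finset.sum_nonneg fun i _ => hG0 i xn
    have hγ0 : 0 < γ := hαi.trans hγ
    have l3 : ∑ i ∈ Bad, ∫ xn, (E i).indicator g xn ∂ν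
        ≤ (Cc * (n : ℝ) ^ ((K : ℝ) / 2)) *
          (Cc * (Real.exp (-(γ * REG n)) * Real.exp (-(γ * (n * b))))) := by
      calc _ ≤ ∑ _i ∈ Bad, Cc * (Real.exp (-(γ * REG n)) * Real.exp (-(γ * (n * b)))) := by
            refine Finset.sum_le_sum fun i hi => (hGe i).trans ?_
            have hdi := (Finset.mem_filter.mp hi).2
            apply mul_le_mul_of_nonneg_left _ hCc.le
            rw [← Real.exp_add]
            apply Real.exp_le_exp.mpr
            have e1 : REG n + n * b ≤ n * dv i := by
              have := mul_le_mul_of_nonneg_left hdi.le hn0.le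
              rw [mul_add, mul_div_cancel₀ _ hn0.ne'] at this
              exact this
            nlinarith
        _ = Bad.card * (Cc * (Real.exp (-(γ * REG n)) * Real.exp (-(γ * (n * b))))) := by
            rw [Finset.sum_const, nsmul_eq_mul]
        _ ≤ _ := by
            apply mul_le_mul_of_nonneg_right _ (by positivity)
            refine le_trans ?_ hMb
            have : Bad.card ≤ M := by
              simpa using Finset.card_le_univ Bad
            exact_mod_cast this
    have l4 : (Cc * (n : ℝ) ^ ((K : ℝ) / 2)) *
          (Cc * (Real.exp (-(γ * REG n)) * Real.exp (-(γ * (n * b)))))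
        < Real.exp (-(γ * (n * b))) := by
      calc _ = (Cc * Cc * (n : ℝ) ^ ((K : ℝ) / 2) * Real.exp (-(γ * REG n))) *
            Real.exp (-(γ * (n * b))) := by ring
        _ < 1 * Real.exp (-(γ * (n * b))) := mul_lt_mul_of_pos_right hs1 (Real.exp_pos _)
        _ = _ := one_mul _
    have l5 : Real.exp (-(γ * (n * b))) ≤ Real.exp (-(n * b) / α) := by
      apply Real.exp_le_exp.mpr
      rw [div_eq_mul_inv]
      have : 0 < n * b := by positivity
      nlinarith
    linarith

/-! ### the exponential family structure from the hypotheses -/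

/-- bounded coordinates of differences -/
lemma exists_coord {K : ℕ} (Θ : Set (Fin K → ℝ)) (θ0 : Fin K → ℝ) :
    ∃ (ι : Type) (_ : Fintype ι) (θi : ι → Fin K → ℝ) (Cb : ℝ), 0 ≤ Cb ∧ (∀ i, θi i ∈ Θ) ∧
      ∀ z ∈ Θ, ∀ w ∈ Θ, ∃ c : ι → ℝ, (∀ i, |c i| ≤ Cb * ‖z - w‖) ∧
        z - w = ∑ i, c i • (θi i - θ0) := by
  obtain ⟨b, hbt, hspan, hli⟩ := exists_linearIndependent ℝ ((fun θ => θ - θ0) '' Θ)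
  have hfin : Finite b := hli.finite
  have := Fintype.ofFinite b
  have hmem : ∀ i : b, ∃ θ ∈ Θ, θ - θ0 = i := fun i => hbt i.2
  choose θi hθi hθe using hmem
  set T := Fintype.linearCombination ℝ (fun i : b => (i : Fin K → ℝ)) with hT
  have hker : LinearMap.ker T = ⊥ := by
    rw [LinearMap.ker_eq_bot']
    intro m hm
    have := Fintype.linearIndependent_iff.mp hli m (by
      simpa [hT, Fintype.linearCombination_apply] using hm)
    funext i; exact this i
  obtain ⟨g, hg⟩ := T.exists_leftInverse_of_injective hker
  set gc := LinearMap.toContinuousLinearMap g with hgc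
  refine ⟨b, inferInstance, θi, ‖gc‖, norm_nonneg _, hθi, fun z hz w hw => ⟨g (z - w), ?_, ?_⟩⟩
  · intro i
    calc |g (z - w) i| ≤ ‖g (z - w)‖ := norm_le_pi_norm (g (z - w)) i
      _ = ‖gc (z - w)‖ := rfl
      _ ≤ _ := gc.le_opNorm _
  · have hin : z - w ∈ LinearMap.range T := by
      rw [hT, Fintype.range_linearCombination]
      have e : Set.range (fun i : b => (i : Fin K → ℝ)) = b := Subtype.range_val
      rw [e, hspan]
      have h1 : z - θ0 ∈ Submodule.span ℝ ((fun θ => θ - θ0) '' Θ) :=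
        Submodule.subset_span ⟨z, hz, rfl⟩
      have h2 : w - θ0 ∈ Submodule.span ℝ ((fun θ => θ - θ0) '' Θ) :=
        Submodule.subset_span ⟨w, hw, rfl⟩
      have := Submodule.sub_mem _ h1 h2
      simpa using this
    obtain ⟨c, hc⟩ := hin
    have hgT : g (T c) = c := by
      have := congrArg (fun l => l c) hg
      simpa using this
    rw [← hc, hgT, hT, Fintype.linearCombination_apply]
    refine Finset.sum_congr rfl fun i _ => ?_
    rw [hθe i]

section Build

variable {K : ℕ} {X : Type*} [MeasurableSpace X] {μ : Measure X} {Θ : Set (Fin K → ℝ)}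
  {p : (Fin K → ℝ) → X → ℝ} {ζ lamBar : ℝ}

lemma seg_all (hΘconv : Convex ℝ Θ)
    (hA1 : ∀ x : X, ContDiffOn ℝ 3 (fun θ => Real.log (p θ x)) Θ) (hζ : 0 < ζ)
    (hA2 : ∀ θ ∈ Θ, ∀ z : Fin K → ℝ, euclNorm z = 1 →
      ζ ≤ z ⬝ᵥ (FisherJ μ p θ).mulVec z ∧ z ⬝ᵥ (FisherJ μ p θ).mulVec z ≤ lamBar)
    (hexp : ∀ θ ∈ Θ, ∀ x : X, Jhat1 p θ x = FisherJ μ p θ)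
    {w v : Fin K → ℝ} (hw : w ∈ Θ) (hv : v ∈ Θ) (hne : v ≠ w) :
    ∃ g2 : ℝ → ℝ, (∀ s ∈ Set.Ioo (0 : ℝ) 1, 0 < g2 s ∧ g2 s ≤ lamBar * euclNorm (v - w) ^ 2) ∧
      ∀ x, ContinuousOn (fun s : ℝ => Real.log (p (w + s • (v - w)) x)) (Set.Icc 0 1) ∧
        DifferentiableOn ℝ (fun s : ℝ => Real.log (p (w + s • (v - w)) x)) (Set.Ioo 0 1) ∧
        ∀ s ∈ Set.Ioo (0 : ℝ) 1,
          HasDerivAt (deriv fun s : ℝ => Real.log (p (w + s • (v - w)) x)) (-(g2 s)) s := by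
  have hseg : ∀ s ∈ Set.Icc (0 : ℝ) 1, w + s • (v - w) ∈ Θ := fun s hs =>
    hΘconv.add_smul_sub_mem hw hv hs
  have hu : v - w ≠ 0 := sub_ne_zero.mpr hne
  have hpos := euclNorm_pos hu
  refine ⟨fun s => (v - w) ⬝ᵥ (FisherJ μ p (w + s • (v - w))).mulVec (v - w), ?_, fun x => ?_⟩
  · intro s hs
    have := quad_bounds _ ζ lamBar (hA2 _ (hseg s ⟨hs.1.le, hs.2.le⟩)) (v - w) hu
    exact ⟨lt_of_lt_of_le (by positivity) this.1, this.2⟩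
  · have hcd : ContDiffOn ℝ 3 (fun s : ℝ => Real.log (p (w + s • (v - w)) x)) (Set.Icc 0 1) := by
      refine (hA1 x).comp (t := Θ) (f := fun s : ℝ => w + s • (v - w)) ?_ hseg
      exact ContDiff.contDiffOn (by fun_prop)
    refine ⟨hcd.continuousOn, (hcd.differentiableOn (by norm_num)).mono Set.Ioo_subset_Icc_self,
      fun s hs => ?_⟩
    have hmem := hseg s ⟨hs.1.le, hs.2.le⟩
    refine seg_deriv (fun θ => Real.log (p θ x)) Θ (hA1 x) _ w (v - w) hseg s hs ?_ ?_ ?_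
    · intro i j
      rw [← hexp _ hmem x]; rfl
    · intro j
      have hj : euclNorm (Pi.single j (1 : ℝ) : Fin K → ℝ) = 1 := by
        unfold euclNorm
        rw [Finset.sum_eq_single j]
        · simp
        · intro b _ hb
          simp [Pi.single_apply, hb]
        · simp
      have := (hA2 _ hmem _ hj).1
      simp at this
      exact (hζ.trans_le this).ne'
    · have := quad_bounds _ ζ lamBar (hA2 _ hmem) (v - w) hu
      exact (lt_of_lt_of_le (by positivity) this.1).ne'

lemma exp_log_props (hΘconv : Convex ℝ Θ)
    (hp_nonneg : ∀ θ ∈ Θ, ∀ x, 0 ≤ p θ x) (hp_meas : ∀ θ ∈ Θ, Measurable (p θ))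
    (hp_prob : ∀ θ ∈ Θ, ∫ x, p θ x ∂μ = 1)
    (hA1 : ∀ x : X, ContDiffOn ℝ 3 (fun θ => Real.log (p θ x)) Θ) (hζ : 0 < ζ)
    (hA2 : ∀ θ ∈ Θ, ∀ z : Fin K → ℝ, euclNorm z = 1 →
      ζ ≤ z ⬝ᵥ (FisherJ μ p θ).mulVec z ∧ z ⬝ᵥ (FisherJ μ p θ).mulVec z ≤ lamBar)
    (hexp : ∀ θ ∈ Θ, ∀ x : X, Jhat1 p θ x = FisherJ μ p θ)
    {w v : Fin K → ℝ} (hw : w ∈ Θ) (hv : v ∈ Θ) (hne : v ≠ w) :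
    ∫ x, Real.exp (Real.log (p w x)) ∂μ = 1 ∧
      p w =ᵐ[μ] fun x => Real.exp (Real.log (p w x)) := by
  obtain ⟨g2, hg2, hgx⟩ := seg_all hΘconv hA1 hζ hA2 hexp hw hv hne
  have hIntg : ∀ θ ∈ Θ, Integrable (p θ) μ := fun θ hθ => by
    by_contra hcon
    have := hp_prob θ hθ
    rw [integral_undef hcon] at this
    norm_num at this
  set sk : ℕ → ℝ := fun k => 1 / ((k : ℝ) + 1) with hsk
  have hsk0 : ∀ k, 0 < sk k := fun k => by simp only [hsk]; positivity
  have hsk1 : ∀ k, sk k ≤ 1 := fun k => by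
    simp only [hsk]
    rw [div_le_one (by positivity)]
    have : (0 : ℝ) ≤ k := Nat.cast_nonneg k
    linarith
  have hskt : Filter.Tendsto sk Filter.atTop (nhds 0) := tendsto_one_div_add_atTop_nhds_zero_nat
  set θk : ℕ → Fin K → ℝ := fun k => w + sk k • (v - w) with hθk
  have hθkm : ∀ k, θk k ∈ Θ := fun k => hΘconv.add_smul_sub_mem hw hv ⟨(hsk0 k).le, hsk1 k⟩
  have hlim : ∀ x, Filter.Tendsto (fun k => p (θk k) x) Filter.atTop
      (nhds (Real.exp (Real.log (p w x)))) := by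
    intro x
    obtain ⟨hc, hd, h2⟩ := hgx x
    obtain ⟨ε, hε, hnz⟩ := eventually_ne_zero_of_strict _ (fun s => -(g2 s)) hc h2
      (fun s hs => by linarith [(hg2 s hs).1])
    have ht : Filter.Tendsto (fun k => Real.log (p (θk k) x)) Filter.atTop
        (nhds (Real.log (p w x))) := by
      have h0 := hc 0 ⟨le_rfl, zero_le_one⟩
      have h1 : Filter.Tendsto sk Filter.atTop (nhdsWithin 0 (Set.Icc 0 1)) :=
        tendsto_nhdsWithin_iff.mpr ⟨hskt, Filter.Eventually.of_forall fun k =>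
          ⟨(hsk0 k).le, hsk1 k⟩⟩
      have := Filter.Tendsto.comp h0 h1
      simpa [Function.comp_def] using this
    refine ((Real.continuous_exp.tendsto _).comp ht).congr' ?_
    filter_upwards [hskt.eventually (gt_mem_nhds hε)] with k hk
    have := hnz (sk k) (hsk0 k) hk
    have hpos : 0 < p (θk k) x := by
      rcases (hp_nonneg _ (hθkm k) x).lt_or_eq with h | h
      · exact h
      · exfalso; apply this
        show Real.log (p (θk k) x) = 0
        rw [← h, Real.log_zero]
    exact Real.exp_log hpos
  have hmexp : Measurable fun x => Real.exp (Real.log (p w x)) :=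
    Real.measurable_exp.comp (Real.measurable_log.comp (hp_meas w hw))
  have hlint : ∫⁻ x, ENNReal.ofReal (Real.exp (Real.log (p w x))) ∂μ ≤ 1 := by
    have h1 := lintegral_liminf_le (μ := μ) (u := Filter.atTop)
      (f := fun k x => ENNReal.ofReal (p (θk k) x))
      (fun k => (hp_meas _ (hθkm k)).ennreal_ofReal)
    have h2 : ∀ x, Filter.liminf (fun k => ENNReal.ofReal (p (θk k) x)) Filter.atTop
        = ENNReal.ofReal (Real.exp (Real.log (p w x))) := fun x =>
      (ENNReal.tendsto_ofReal (hlim x)).liminf_eq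
    have h3 : ∀ k, ∫⁻ x, ENNReal.ofReal (p (θk k) x) ∂μ = 1 := fun k => by
      rw [← ofReal_integral_eq_lintegral_ofReal (hIntg _ (hθkm k))
        (Filter.Eventually.of_forall (hp_nonneg _ (hθkm k))), hp_prob _ (hθkm k),
        ENNReal.ofReal_one]
    simp only [h2, h3] at h1
    simpa using h1
  have hiexp : Integrable (fun x => Real.exp (Real.log (p w x))) μ := by
    refine ⟨hmexp.aestronglyMeasurable, ?_⟩
    rw [hasFiniteIntegral_iff_ofReal (Filter.Eventually.of_forall fun x => (Real.exp_pos _).le)]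
    exact hlint.trans_lt ENNReal.one_lt_top
  have hle : ∫ x, Real.exp (Real.log (p w x)) ∂μ ≤ 1 := by
    rw [← ofReal_integral_eq_lintegral_ofReal hiexp
      (Filter.Eventually.of_forall fun x => (Real.exp_pos _).le)] at hlint
    exact ENNReal.ofReal_le_one.mp hlint
  have hge : 1 ≤ ∫ x, Real.exp (Real.log (p w x)) ∂μ := by
    rw [← hp_prob w hw]
    exact integral_mono (hIntg w hw) hiexp fun x => Real.le_exp_log _
  have heq := le_antisymm hle hge
  refine ⟨heq, ?_⟩
  have hz : ∫ x, (Real.exp (Real.log (p w x)) - p w x) ∂μ = 0 := by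
    rw [integral_sub hiexp (hIntg w hw), heq, hp_prob w hw, sub_self]
  have := (integral_eq_zero_iff_of_nonneg (f := fun x => Real.exp (Real.log (p w x)) - p w x)
    (fun x => sub_nonneg.mpr (Real.le_exp_log _))
    (hiexp.sub (hIntg w hw))).mp hz
  filter_upwards [this] with x hx
  simp only [Pi.zero_apply] at hx
  linarith

lemma build_fam (hΘc : IsCompact Θ) (hΘconv : Convex ℝ Θ)
    (hp_nonneg : ∀ θ ∈ Θ, ∀ x, 0 ≤ p θ x) (hp_meas : ∀ θ ∈ Θ, Measurable (p θ))
    (hp_prob : ∀ θ ∈ Θ, ∫ x, p θ x ∂μ = 1)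
    (hA1 : ∀ x : X, ContDiffOn ℝ 3 (fun θ => Real.log (p θ x)) Θ) (hζ : 0 < ζ)
    (hlb : 0 < lamBar)
    (hA2 : ∀ θ ∈ Θ, ∀ z : Fin K → ℝ, euclNorm z = 1 →
      ζ ≤ z ⬝ᵥ (FisherJ μ p θ).mulVec z ∧ z ⬝ᵥ (FisherJ μ p θ).mulVec z ≤ lamBar)
    (hexp : ∀ θ ∈ Θ, ∀ x : X, Jhat1 p θ x = FisherJ μ p θ)
    (hnt : Θ.Nontrivial) (x0 : X) :
    ∃ (B L D C2 Cb : ℝ) (ι : Type) (_ : Fintype ι) (θ0 : Fin K → ℝ) (θi : ι → Fin K → ℝ),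
      Fam μ Θ (fun θ x => Real.log (p θ x)) (fun θ => -Real.log (p θ x0)) B L D C2 Cb θ0 θi := by
  obtain ⟨θ0, h0⟩ := hnt.nonempty
  obtain ⟨ι, _, θi, Cb, hCb, hθi, hcoord⟩ := exists_coord Θ θ0
  have hψc : ContDiffOn ℝ 3 (fun θ => -Real.log (p θ x0)) Θ := (hA1 x0).neg
  obtain ⟨Lk, hLk⟩ := LocallyLipschitzOn.exists_lipschitzOnWith_of_compact hΘc
    (ContDiffOn.locallyLipschitzOn hΘconv (hψc.of_le (by norm_num)))
  obtain ⟨B, hB⟩ := hΘc.exists_bound_of_continuousOn hψc.continuousOn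
  obtain ⟨D0, hD0, hD⟩ := hΘc.isBounded.exists_pos_norm_le
  have hdiam : ∀ v ∈ Θ, ∀ w ∈ Θ, ‖v - w‖ ≤ 2 * D0 := fun v hv w hw =>
    (norm_sub_le _ _).trans (by linarith [hD v hv, hD w hw])
  have haff : ∀ w ∈ Θ, ∀ v ∈ Θ, ∀ s ∈ Set.Icc (0 : ℝ) 1, ∀ x,
      Real.log (p (w + s • (v - w)) x) + -Real.log (p (w + s • (v - w)) x0)
        = (1 - s) * (Real.log (p w x) + -Real.log (p w x0))
          + s * (Real.log (p v x) + -Real.log (p v x0)) := by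
    intro w hw v hv s hs x
    by_cases hne : v = w
    · subst hne; simp; ring
    obtain ⟨g2, hg2, hgx⟩ := seg_all hΘconv hA1 hζ hA2 hexp hw hv hne
    obtain ⟨c1, d1, e1⟩ := hgx x
    obtain ⟨c2, d2, e2⟩ := hgx x0
    have := affine_of_deriv2 (fun s : ℝ => Real.log (p (w + s • (v - w)) x)
      + -Real.log (p (w + s • (v - w)) x0)) (c1.add c2.neg) (d1.add d2.neg) (fun s hs => by
        have h := (e1 s hs).sub (e2 s hs)
        rw [sub_self] at h
        refine h.congr_of_eventuallyEq ?_
        filter_upwards [isOpen_Ioo.mem_nhds hs] with y hy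
        have a1 := (d1.differentiableAt (isOpen_Ioo.mem_nhds hy)).hasDerivAt
        have a2 := (d2.differentiableAt (isOpen_Ioo.mem_nhds hy)).hasDerivAt
        have a3 := (a1.sub a2).deriv
        simp only [Pi.sub_apply]
        rw [← a3]
        congr 1) s hs
    simpa using this
  refine ⟨max B 0, Lk, 2 * D0, lamBar * (K * (2 * D0) ^ 2), Cb, ι, inferInstance, θ0, θi, ?_⟩
  refine
    { conv := hΘconv
      meas := fun θ hθ => Real.measurable_log.comp (hp_meas θ hθ)
      int := ?_
      aff := haff
      B0 := le_max_right _ _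
      L0 := Lk.2
      C20 := by positivity
      Cb0 := hCb
      bdd := fun θ hθ => (hB θ hθ).trans (le_max_left _ _)
      lip := ?_
      diam := hdiam
      sec := ?_
      h0 := h0
      hi := hθi
      coord := ?_ }
  · intro θ hθ
    obtain ⟨v, hv, hne⟩ := hnt.exists_ne θ
    exact (exp_log_props hΘconv hp_nonneg hp_meas hp_prob hA1 hζ hA2 hexp hθ hv hne).1
  · intro v hv w hw
    have := hLk.dist_le_mul v hv w hw
    rwa [Real.dist_eq, dist_eq_norm] at this
  · intro w hw v hv s hs
    by_cases hne : v = w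
    · subst hne
      simp only [sub_self, smul_zero, add_zero]
      have : 0 ≤ lamBar * (K * (2 * D0) ^ 2) * s ^ 2 := by positivity
      linarith
    obtain ⟨g2, hg2, hgx⟩ := seg_all hΘconv hA1 hζ hA2 hexp hw hv hne
    obtain ⟨c2, d2, e2⟩ := hgx x0
    have hen : euclNorm (v - w) ^ 2 ≤ K * (2 * D0) ^ 2 := by
      rw [euclNorm_sq]
      calc _ ≤ ∑ _i : Fin K, (2 * D0) ^ 2 := by
            refine Finset.sum_le_sum fun i _ => ?_
            rw [← sq_abs]
            exact pow_le_pow_left₀ (abs_nonneg _)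
              ((norm_le_pi_norm (v - w) i).trans (hdiam v hv w hw)) 2
        _ = _ := by simp
    have := second_diff_of_deriv2 (fun s : ℝ => -Real.log (p (w + s • (v - w)) x0)) g2
      (lamBar * (K * (2 * D0) ^ 2)) c2.neg d2.neg (fun s hs => by
        have h := (e2 s hs).neg
        rw [neg_neg] at h
        refine h.congr_of_eventuallyEq ?_
        filter_upwards [isOpen_Ioo.mem_nhds hs] with y hy
        have a2 := (d2.differentiableAt (isOpen_Ioo.mem_nhds hy)).hasDerivAt
        have a3 := a2.neg.deriv
        simp only [Pi.neg_apply]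
        rw [← a3]
        congr 1)
      (fun s hs => (hg2 s hs).2.trans (mul_le_mul_of_nonneg_left hen hlb.le)) s hs
    simpa using this
  · -- coordinates
    have hlin : ∀ x, ∃ l : (Fin K → ℝ) →L[ℝ] ℝ, ∀ θ ∈ Θ,
        (Real.log (p θ x) + -Real.log (p θ x0)) - (Real.log (p θ0 x) + -Real.log (p θ0 x0))
          = l (θ - θ0) := by
      intro x
      have hd : DifferentiableWithinAt ℝ
          (fun θ => Real.log (p θ x) + -Real.log (p θ x0)) Θ θ0 :=
        (((hA1 x).differentiableOn (by norm_num)) θ0 h0).add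
          ((hψc.differentiableOn (by norm_num)) θ0 h0)
      refine ⟨fderivWithin ℝ (fun θ => Real.log (p θ x) + -Real.log (p θ x0)) Θ θ0,
        fun θ hθ => ?_⟩
      have hline : HasDerivWithinAt (fun s : ℝ => θ0 + s • (θ - θ0)) (θ - θ0)
          (Set.Icc 0 1) 0 := by
        have := ((hasDerivAt_id (0 : ℝ)).smul_const (θ - θ0)).const_add θ0
        simp only [one_smul] at this
        exact this.hasDerivWithinAt
      have hfd := hd.hasFDerivWithinAt
      have hfd' : HasFDerivWithinAt (fun θ => Real.log (p θ x) + -Real.log (p θ x0))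
          (fderivWithin ℝ (fun θ => Real.log (p θ x) + -Real.log (p θ x0)) Θ θ0) Θ
          ((fun s : ℝ => θ0 + s • (θ - θ0)) 0) := by
        simpa using hfd
      have h1 := hfd'.comp_hasDerivWithinAt (0 : ℝ) hline
        (fun s hs => hΘconv.add_smul_sub_mem h0 hθ hs)
      have h2 : HasDerivWithinAt
          ((fun θ => Real.log (p θ x) + -Real.log (p θ x0)) ∘ fun s : ℝ => θ0 + s • (θ - θ0))
          ((Real.log (p θ x) + -Real.log (p θ x0)) - (Real.log (p θ0 x) + -Real.log (p θ0 x0)))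
          (Set.Icc 0 1) 0 := by
        have h3 : HasDerivAt (fun s : ℝ => (Real.log (p θ0 x) + -Real.log (p θ0 x0))
            + s * ((Real.log (p θ x) + -Real.log (p θ x0))
              - (Real.log (p θ0 x) + -Real.log (p θ0 x0))))
            ((Real.log (p θ x) + -Real.log (p θ x0))
              - (Real.log (p θ0 x) + -Real.log (p θ0 x0))) 0 := by
          have := ((hasDerivAt_id (0 : ℝ)).mul_const ((Real.log (p θ x) + -Real.log (p θ x0))
              - (Real.log (p θ0 x) + -Real.log (p θ0 x0)))).const_add
              (Real.log (p θ0 x) + -Real.log (p θ0 x0))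
          simp only [one_mul] at this
          exact this
        refine h3.hasDerivWithinAt.congr (fun s hs => ?_) ?_
        · simp only [Function.comp]
          rw [haff θ0 h0 θ hθ s hs x]; ring
        · simp
      exact UniqueDiffWithinAt.eq_deriv (Set.Icc (0 : ℝ) 1)
        (uniqueDiffOn_Icc_zero_one 0 ⟨le_rfl, zero_le_one⟩) h2 h1
    intro z hz w hw
    obtain ⟨c, hc, hce⟩ := hcoord z hz w hw
    refine ⟨c, hc, fun x => ?_⟩
    obtain ⟨l, hl⟩ := hlin x
    have e1 := hl z hz
    have e2 := hl w hw
    have e3 : l (z - θ0) - l (w - θ0) = ∑ i, c i * l (θi i - θ0) := by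
      rw [← map_sub, sub_sub_sub_cancel_right, hce, map_sum]
      simp
    calc _ = l (z - θ0) - l (w - θ0) := by rw [← e1, ← e2]; ring
      _ = ∑ i, c i * l (θi i - θ0) := e3
      _ = _ := Finset.sum_congr rfl fun i _ => by rw [← hl _ (hθi i)]

lemma core_of_subsingleton [SigmaFinite μ] (hΘs : Θ.Subsingleton) (hΘne : Θ.Nonempty)
    (hp_nonneg : ∀ θ ∈ Θ, ∀ x, 0 ≤ p θ x) (hp_meas : ∀ θ ∈ Θ, Measurable (p θ))
    (hp_prob : ∀ θ ∈ Θ, ∫ x, p θ x ∂μ = 1) (lam : ℝ) : Core μ Θ p lam := by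
  obtain ⟨θ0, h0⟩ := hΘne
  refine ⟨1, one_pos, 1, fun n hn => ⟨1, one_pos, ?_, fun _ => p θ0, fun _ => hp_nonneg θ0 h0,
    fun _ => hp_meas θ0 h0, fun _ => hp_prob θ0 h0, fun θs hs i => ⟨0, ?_⟩⟩⟩
  · rw [one_mul, Nat.cast_one]
    exact Real.one_le_rpow (by exact_mod_cast hn) (by positivity)
  · have : θs = θ0 := hΘs hs h0
    subst this
    have hr : renyiDiv μ lam (p θs) (p θs) = 0 := by
      unfold renyiDiv
      have : ∀ x, p θs x * (p θs x / p θs x) ^ (1 - lam) = p θs x := by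
        intro x
        by_cases h : p θs x = 0
        · simp [h]
        · rw [div_self h, Real.one_rpow, mul_one]
      simp only [this]
      rw [hp_prob θs hs, Real.log_one, mul_zero]
    rw [hr]
    have hIntg : Integrable (p θs) μ := by
      by_contra hcon
      have := hp_prob θs hs
      rw [integral_undef hcon] at this
      norm_num at this
    have hgi : Integrable (fun xn : Fin n → X => ∏ t, p θs (xn t))
        (Measure.pi fun _ : Fin n => μ) :=
      Integrable.fintype_prod (f := fun (_ : Fin n) x => p θs x) fun _ => hIntg
    refine (setIntegral_le_integral hgi (Filter.Eventually.of_forall fun xn =>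
      Finset.prod_nonneg fun t _ => hp_nonneg θs hs _)).trans ?_
    rw [integral_fintype_prod_eq_prod (f := fun (_ : Fin n) x => p θs x)]
    simp [hp_prob θs hs]

end Build

/-- **Corollary 1 (risk and loss bounds for exponential families).**
Let `M` be an exponential family (`Ĵ(θ;x) = J(θ)` identically) satisfying (A1)–(A6)
with boundary exponent `d > 0`, let `α > 1`, `lam ∈ (0, 1−α⁻¹]`, `a > 0` and
`0 < 2ι < d`, and let `REḠ = α((K/2)log n + log ∫_Θ (det J)^{1/2} + f(n) + n^{−ι})`.
Then there is a (combined) two-part code whose MDL estimator satisfies, for every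
`p* ∈ M` and all large `n`, `E[d̄_lam(p*‖p̈)] ≤ REḠ/n` and
`Pr{d̄_lam(p*‖p̈) > REḠ/n + b} < e^{−nb/α}` for every `b > 0`. -/
theorem stmt6 {K : ℕ} (hK : 0 < K) {X : Type*} [MeasurableSpace X]
    (μ : Measure X) [SigmaFinite μ]
    (Θ : Set (Fin K → ℝ)) (hΘc : IsCompact Θ) (hΘconv : Convex ℝ Θ) (hΘne : Θ.Nonempty)
    (p : (Fin K → ℝ) → X → ℝ)
    (hp_nonneg : ∀ θ ∈ Θ, ∀ x, 0 ≤ p θ x) (hp_meas : ∀ θ ∈ Θ, Measurable (p θ))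
    (hp_prob : ∀ θ ∈ Θ, ∫ x, p θ x ∂μ = 1)
    (hA1 : ∀ x : X, ContDiffOn ℝ 3 (fun θ => Real.log (p θ x)) Θ)
    (ζ lamBar : ℝ) (hζ : 0 < ζ) (hlamBar : 0 < lamBar)
    (hA2 : ∀ θ ∈ Θ, ∀ z : Fin K → ℝ, euclNorm z = 1 →
      ζ ≤ z ⬝ᵥ (FisherJ μ p θ).mulVec z ∧ z ⬝ᵥ (FisherJ μ p θ).mulVec z ≤ lamBar)
    (hA3 : ∀ θ ∈ Θ, DifferentiableAt ℝ (fun θ' => (FisherJ μ p θ').det) θ)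
    (DJ : ℝ) (hDJ : 0 < DJ)
    (hA4 : ∀ θ ∈ Θ, ∀ z : Fin K → ℝ, euclNorm z = 1 →
      |fderiv ℝ (fun θ' => Real.sqrt (FisherJ μ p θ').det) θ z| ≤ DJ)
    (κ bbar : ℝ) (hκ : 0 < κ) (hbbar : 0 < bbar)
    (hA5 : ∀ θ₁ ∈ Θ, ∀ θ₂ ∈ Θ, euclNorm (θ₁ - θ₂) ≤ bbar → ∀ z : Fin K → ℝ,
      z ⬝ᵥ (FisherJ μ p θ₁).mulVec z
        ≤ (1 + κ * euclNorm (θ₁ - θ₂)) * (z ⬝ᵥ (FisherJ μ p θ₂).mulVec z))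
    -- exponential-family hypothesis: empirical Fisher = Fisher
    (hexp : ∀ θ ∈ Θ, ∀ x : X, Jhat1 p θ x = FisherJ μ p θ)
    -- maximum likelihood estimator
    (thetahat : (n : ℕ) → (Fin n → X) → (Fin K → ℝ))
    (hMLE : ∀ (n : ℕ) (xn : Fin n → X), thetahat n xn ∈ Θ ∧
      ∀ θ ∈ Θ, ∏ t, p θ (xn t) ≤ ∏ t, p (thetahat n xn) (xn t))
    (α lam a d iot : ℝ) (hα : 1 < α) (hlam : lam ∈ Set.Ioc 0 (1 - α⁻¹))
    (ha : 0 < a) (hd : 0 < d) (hiot : 0 < iot ∧ 2 * iot < d)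
    -- (A6): a boundary two-part code with regret at most `α(K−d)/2·log n + o(log n)`
    (hA6 : ∃ h : ℕ → ℝ,
      Filter.Tendsto (fun n => h n / Real.log n) Filter.atTop (nhds 0) ∧
      ∀ᶠ n : ℕ in Filter.atTop,
        ∃ (ιb : Type) (_ : Countable ιb) (qb : ιb → X → ℝ) (Lb : ιb → ℝ)
          (estb : (Fin n → X) → ιb),
          (∀ i x, 0 ≤ qb i x) ∧ (∀ i, Measurable (qb i)) ∧
          (∀ i, ∫ x, qb i x ∂μ = 1) ∧ (∀ i, 0 ≤ Lb i) ∧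
          (∑' i, Real.exp (-Lb i)) ≤ 1 ∧
          (∀ (xn : Fin n → X) (i : ιb),
            -Real.log (∏ t, qb (estb xn) (xn t)) + α * Lb (estb xn)
              ≤ -Real.log (∏ t, qb i (xn t)) + α * Lb i) ∧
          ∀ xn : Fin n → X, thetahat n xn ∈ frontier Θ →
            Real.log (∏ t, p (thetahat n xn) (xn t))
                - (Real.log (∏ t, qb (estb xn) (xn t)) - α * Lb (estb xn))
              ≤ α * (K - d) / 2 * Real.log n + h n) :
    ∃ CJ > (0 : ℝ), ∃ CΘ > (0 : ℝ), ∃ CJK > (0 : ℝ), ∃ N : ℕ, ∀ n : ℕ, N ≤ n →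
      ∃ (ιc : Type) (_ : Countable ιc) (qc : ιc → X → ℝ) (Lc : ιc → ℝ)
        (estc : (Fin n → X) → ιc),
        (∀ i x, 0 ≤ qc i x) ∧ (∀ i, Measurable (qc i)) ∧
        (∀ i, ∫ x, qc i x ∂μ = 1) ∧ (∀ i, 0 ≤ Lc i) ∧
        (∑' i, Real.exp (-Lc i)) ≤ 1 ∧
        (∀ (xn : Fin n → X) (i : ιc),
          -Real.log (∏ t, qc (estc xn) (xn t)) + α * Lc (estc xn)
            ≤ -Real.log (∏ t, qc i (xn t)) + α * Lc i) ∧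
        ∀ θs ∈ Θ,
          (∫ xn, (∏ t, p θs (xn t)) * renyiDiv μ lam (p θs) (qc (estc xn))
              ∂(Measure.pi fun _ : Fin n => μ))
            ≤ (α * ((K / 2) * Real.log n
                + Real.log (∫ θ in Θ, Real.sqrt (FisherJ μ p θ).det)
                + (((1 + κ * Real.sqrt K * a * (n : ℝ) ^ (-(1 / 4 : ℝ))) *
                      (1 + κ * Real.sqrt K * a * (n : ℝ) ^ (-(1 / 2 : ℝ)) *
                        ζ ^ (-(1 / 2 : ℝ)) / 2)) * K * a ^ 2 / (8 * α)
                  - K * Real.log a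
                  + (Real.log (1 + CJ * (n : ℝ) ^ (-(1 / 4 : ℝ)))
                    + Real.log (1 + CΘ * (n : ℝ) ^ (-(1 / 4 : ℝ)))
                    + Real.log (1 + CJK * (n : ℝ) ^ (-(1 / 4 : ℝ)))))
                + (n : ℝ) ^ (-iot))) / n
          ∧ ∀ b : ℝ, 0 < b →
            (∫ xn in {xn : Fin n → X |
                (α * ((K / 2) * Real.log n
                  + Real.log (∫ θ in Θ, Real.sqrt (FisherJ μ p θ).det)
                  + (((1 + κ * Real.sqrt K * a * (n : ℝ) ^ (-(1 / 4 : ℝ))) *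
                        (1 + κ * Real.sqrt K * a * (n : ℝ) ^ (-(1 / 2 : ℝ)) *
                          ζ ^ (-(1 / 2 : ℝ)) / 2)) * K * a ^ 2 / (8 * α)
                    - K * Real.log a
                    + (Real.log (1 + CJ * (n : ℝ) ^ (-(1 / 4 : ℝ)))
                      + Real.log (1 + CΘ * (n : ℝ) ^ (-(1 / 4 : ℝ)))
                      + Real.log (1 + CJK * (n : ℝ) ^ (-(1 / 4 : ℝ)))))
                  + (n : ℝ) ^ (-iot))) / n + b
                  < renyiDiv μ lam (p θs) (qc (estc xn))},
              (∏ t, p θs (xn t)) ∂(Measure.pi fun _ : Fin n => μ))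
              < Real.exp (-(n * b) / α) := by
  have hα0 : 0 < α := by linarith
  have hl0 := hlam.1
  have hαi : 0 < α⁻¹ := by positivity
  have hl1 : lam < 1 := by linarith [hlam.2]
  have hcore : Core μ Θ p lam := by
    rcases Set.subsingleton_or_nontrivial Θ with hs | hnt
    · exact core_of_subsingleton hs hΘne hp_nonneg hp_meas hp_prob lam
    · have hX : Nonempty X := by
        by_contra hcon
        have hE : IsEmpty X := not_nonempty_iff.mp hcon
        obtain ⟨t0, ht0⟩ := hΘne
        have h1 := hp_prob t0 ht0
        rw [Measure.eq_zero_of_isEmpty μ, integral_zero_measure] at h1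
        norm_num at h1
      obtain ⟨x0⟩ := hX
      obtain ⟨B, L, D, C2, Cb, ι, _, θ0, θi, H⟩ := build_fam hΘc hΘconv hp_nonneg hp_meas
        hp_prob hA1 hζ hlamBar hA2 hexp hnt x0
      refine H.core hΘc hl0 hl1 p hp_nonneg (fun θ _ x => Real.le_exp_log _) (fun θ hθ => ?_)
      obtain ⟨v, hv, hne⟩ := hnt.exists_ne θ
      exact (exp_log_props hΘconv hp_nonneg hp_meas hp_prob hA1 hζ hA2 hexp hθ hv hne).2
  refine ⟨1, one_pos, 1, one_pos, 1, one_pos, ?_⟩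
  refine assemble hK μ Θ p hp_nonneg hp_prob α lam
    (Real.log (∫ θ in Θ, Real.sqrt (FisherJ μ p θ).det) - K * Real.log a) hα hlam hcore
    (fun n => α * ((K / 2) * Real.log n
                + Real.log (∫ θ in Θ, Real.sqrt (FisherJ μ p θ).det)
                + (((1 + κ * Real.sqrt K * a * (n : ℝ) ^ (-(1 / 4 : ℝ))) *
                      (1 + κ * Real.sqrt K * a * (n : ℝ) ^ (-(1 / 2 : ℝ)) *
                        ζ ^ (-(1 / 2 : ℝ)) / 2)) * K * a ^ 2 / (8 * α)
                  - K * Real.log a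
                  + (Real.log (1 + 1 * (n : ℝ) ^ (-(1 / 4 : ℝ)))
                    + Real.log (1 + 1 * (n : ℝ) ^ (-(1 / 4 : ℝ)))
                    + Real.log (1 + 1 * (n : ℝ) ^ (-(1 / 4 : ℝ)))))
                + (n : ℝ) ^ (-iot))) ?_
  intro n _
  refine mul_le_mul_of_nonneg_left ?_ hα0.le
  have t1 : 0 ≤ ((1 + κ * Real.sqrt K * a * (n : ℝ) ^ (-(1 / 4 : ℝ))) *
      (1 + κ * Real.sqrt K * a * (n : ℝ) ^ (-(1 / 2 : ℝ)) *
        ζ ^ (-(1 / 2 : ℝ)) / 2)) * K * a ^ 2 / (8 * α) := by positivity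
  have t2 : 0 ≤ Real.log (1 + 1 * (n : ℝ) ^ (-(1 / 4 : ℝ))) := by
    apply Real.log_nonneg
    have : (0 : ℝ) ≤ (n : ℝ) ^ (-(1 / 4 : ℝ)) := by positivity
    linarith
  have t3 : 0 ≤ (n : ℝ) ^ (-iot) := by positivity
  linarith
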